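/- arXiv:2511.00581 — 3 statements merged into one kernel-verified Lean document; each statement's English description precedes it below -/
import Mathlib

section
/- Let d ≥ 2 and a ≥ 1 be integers, m := 2^d·a, let p be an odd prime and q a power of p. Let Q be the quadratic form on (F_p)^m defined by Q(x) = x₁x₂ + x₃x₄ + ⋯ + x_{m−1}x_m, and let SO_m^+(p) := {g ∈ SL_m(F_p) : Q(g·x) = Q(x) for all x ∈ (F_p)^m}. Let G be a subgroup of GL_m(F_q) containing the image of SO_m^+(p) under the entrywise inclusion F_p ⊆ F_q, and let χ be a faithful irreducible complex character of G. Then: (a) 2^d divides χ(1); (b) if ℚ(χ) ⊆ ℝ and the Frobenius–Schur indicator of χ is +1, then χ has orthogonal discriminant 1; (c) if ℚ(χ) is not contained in ℝ, then χ has unitary discriminant 1. -/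
open Matrix

noncomputable section

namespace Paper

/-- The character of a matrix representation. -/
def charOf {G : Type} [Group G] {n : ℕ} (ρ : G →* GL (Fin n) ℂ) : G → ℂ :=
  fun g => Matrix.trace ((ρ g : Matrix (Fin n) (Fin n) ℂ))

/-- Irreducibility of a complex matrix representation. -/
def IsIrredRep {G : Type} [Group G] {n : ℕ} (ρ : G →* GL (Fin n) ℂ) : Prop :=
  0 < n ∧ ∀ W : Submodule ℂ (Fin n → ℂ),
    (∀ (g : G), ∀ v ∈ W, (ρ g : Matrix (Fin n) (Fin n) ℂ).mulVec v ∈ W) → W = ⊥ ∨ W = ⊤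

/-- `χ` is an irreducible complex character of `G`. -/
def IsIrrChar {G : Type} [Group G] (χ : G → ℂ) : Prop :=
  ∃ (n : ℕ) (ρ : G →* GL (Fin n) ℂ), IsIrredRep ρ ∧ χ = charOf ρ

/-- The character field `ℚ(χ)`, as a subfield of `ℂ`. -/
def charField {G : Type} [Group G] (χ : G → ℂ) : Subfield ℂ :=
  Subfield.closure (Set.range χ)

/-- The subfield of real numbers inside `ℂ`. -/
def realsIn : Subfield ℂ := Subfield.closure (Set.range ((↑) : ℝ → ℂ))

/-- The character field of `χ` is not contained in `ℝ`. -/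
def NotReal {G : Type} [Group G] (χ : G → ℂ) : Prop := ¬ charField χ ≤ realsIn

/-- `χ` has unitary discriminant `d`. -/
def HasUnitaryDisc {G : Type} [Group G] (χ : G → ℂ) (d : ℂ) : Prop :=
  ∀ (n : ℕ) (ρ : G →* GL (Fin n) ℂ),
    χ = charOf ρ →
    (∀ g i j, ((ρ g : Matrix (Fin n) (Fin n) ℂ)) i j ∈ charField χ) →
    ∀ H : Matrix (Fin n) (Fin n) ℂ,
      (∀ i j, H i j ∈ charField χ) →
      IsUnit H.det →
      H.conjTranspose = H →
      (∀ g, ((ρ g : Matrix (Fin n) (Fin n) ℂ)).conjTranspose * H *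
        (ρ g : Matrix (Fin n) (Fin n) ℂ) = H) →
      ∃ z ∈ charField χ, z ≠ 0 ∧
        (-1 : ℂ) ^ (n * (n - 1) / 2) * H.det = d * (z * (starRingEnd ℂ) z)

/-- `χ` has orthogonal discriminant `d`. -/
def HasOrthDisc {G : Type} [Group G] (χ : G → ℂ) (d : ℂ) : Prop :=
  ∀ (n : ℕ) (ρ : G →* GL (Fin n) ℂ),
    χ = charOf ρ →
    (∀ g i j, ((ρ g : Matrix (Fin n) (Fin n) ℂ)) i j ∈ charField χ) →
    ∀ H : Matrix (Fin n) (Fin n) ℂ,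
      (∀ i j, H i j ∈ charField χ) →
      IsUnit H.det →
      H.transpose = H →
      (∀ g, ((ρ g : Matrix (Fin n) (Fin n) ℂ)).transpose * H *
        (ρ g : Matrix (Fin n) (Fin n) ℂ) = H) →
      ∃ z ∈ charField χ, z ≠ 0 ∧
        (-1 : ℂ) ^ (n * (n - 1) / 2) * H.det = d * z ^ 2

/-- `χ` is a rational character. -/
def IsRationalChar {G : Type} [Group G] (χ : G → ℂ) : Prop :=
  ∀ g, ∃ r : ℚ, χ g = (r : ℂ)

/-- `χ` is the character of a representation over `ℚ`. -/
def RealizableOverQ {G : Type} [Group G] (χ : G → ℂ) : Prop :=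
  ∃ (n : ℕ) (ρ : G →* GL (Fin n) ℂ), χ = charOf ρ ∧
    ∀ g i j, ∃ r : ℚ, ((ρ g : Matrix (Fin n) (Fin n) ℂ)) i j = (r : ℂ)

end Paper

namespace Paper

/-- The Frobenius–Schur indicator of a character. -/
def FSind {G : Type} [Group G] (χ : G → ℂ) : ℂ :=
  (Nat.card G : ℂ)⁻¹ * ∑ᶠ g : G, χ (g * g)

/-- The quadratic form `Q(x) = x₁x₂ + x₃x₄ + ⋯ + x_{m-1}x_m` on `(F_p)^m`,
`m = 2·half`. -/
def Qform (p half : ℕ) (x : Fin (2 * half) → ZMod p) : ZMod p :=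
  ∑ i : Fin half,
    x ⟨2 * (i : ℕ), by have := i.isLt; omega⟩ *
    x ⟨2 * (i : ℕ) + 1, by have := i.isLt; omega⟩


section Linear

variable {n : ℕ}

theorem idem_trace_nat (P : Matrix (Fin n) (Fin n) ℂ) (hP : P * P = P) :
    ∃ c : ℕ, P.trace = c := by
  have h : IsIdempotentElem (Matrix.toLin' P) := by
    unfold IsIdempotentElem
    rw [Module.End.mul_eq_comp, ← Matrix.toLin'_mul, hP]
  have h2 := (LinearMap.isProj_range_iff_isIdempotentElem _).mpr h
  exact ⟨_, (Matrix.trace_toLin'_eq P).symm.trans h2.trace⟩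

theorem idem_trace_zero (P : Matrix (Fin n) (Fin n) ℂ) (hP : P * P = P) (h0 : P.trace = 0) :
    P = 0 := by
  have h : IsIdempotentElem (Matrix.toLin' P) := by
    unfold IsIdempotentElem
    rw [Module.End.mul_eq_comp, ← Matrix.toLin'_mul, hP]
  have := LinearMap.IsIdempotentElem.eq_zero_of_trace_eq_zero h
    (by rw [Matrix.trace_toLin'_eq, h0])
  simpa using this

theorem trace_zero_of_anti (P X Z : Matrix (Fin n) (Fin n) ℂ) (hPZ : P * Z = Z * P)
    (hXZ : X * Z = -(Z * X)) (hZ : IsUnit Z) : (P * X).trace = 0 := by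
  obtain ⟨u, rfl⟩ := hZ
  have h1 : (P * X) * (u : Matrix (Fin n) (Fin n) ℂ) = -((u : Matrix (Fin n) (Fin n) ℂ) * (P * X)) := by
    rw [mul_assoc, hXZ, mul_neg, ← mul_assoc, hPZ, mul_assoc]
  have h2 : (P * X).trace = -(P * X).trace := by
    calc (P * X).trace = ((P * X) * (u : Matrix (Fin n) (Fin n) ℂ) * (↑u⁻¹ : Matrix (Fin n) (Fin n) ℂ)).trace := by
            rw [mul_assoc, Units.mul_inv, mul_one]
      _ = -(P * X).trace := by
            rw [h1, neg_mul, Matrix.trace_neg, Matrix.trace_mul_comm, ← mul_assoc, Units.inv_mul, one_mul]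
  have : (2 : ℂ) * (P * X).trace = 0 := by linear_combination h2
  simpa using this

theorem pow_dvd_of_family {ι : Type} [Fintype ι] [DecidableEq ι]
    (X Z : ι → Matrix (Fin n) (Fin n) ℂ)
    (hXX : ∀ i j, X i * X j = X j * X i)
    (hXZ : ∀ i j, i ≠ j → X i * Z j = Z j * X i)
    (hA : ∀ i, X i * Z i = -(Z i * X i))
    (hZ : ∀ i, IsUnit (Z i))
    (hX2 : ∀ i, X i * X i = 1 ∨ X i * X i = -1) :
    ∃ c : ℕ, n = 2 ^ (Fintype.card ι) * c := by
  have key : ∀ S : Finset ι, ∃ P : Matrix (Fin n) (Fin n) ℂ, P * P = P ∧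
      (∀ i, P * X i = X i * P) ∧ (∀ i, i ∉ S → P * Z i = Z i * P) ∧
      (2 : ℂ) ^ S.card * P.trace = n := by
    intro S
    induction S using Finset.induction_on with
    | empty => exact ⟨1, by simp, by simp, by simp, by simp⟩
    | insert i S hi ih =>
      obtain ⟨P, hPP, hPX, hPZ, hT⟩ := ih
      obtain ⟨c, hc⟩ : ∃ c : ℂ, (c • X i) * (c • X i) = 1 := by
        rcases hX2 i with h | h
        · exact ⟨1, by simp [h]⟩
        · refine ⟨Complex.I, ?_⟩
          rw [smul_mul_smul_comm, h, Complex.I_mul_I]; simp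
      set Y := c • X i with hY
      have hPY : P * Y = Y * P := by simp [hY, hPX]
      refine ⟨(1 / 2 : ℂ) • (P * (1 + Y)), ?_, ?_, ?_, ?_⟩
      · rw [smul_mul_smul_comm]
        have : P * (1 + Y) * (P * (1 + Y)) = (2 : ℂ) • (P * (1 + Y)) := by
          have e1 : P * (1 + Y) = (1 + Y) * P := by rw [mul_add, add_mul, hPY, mul_one, one_mul]
          calc P * (1 + Y) * (P * (1 + Y)) = P * ((1 + Y) * P) * (1 + Y) := by noncomm_ring
            _ = P * P * ((1 + Y) * (1 + Y)) := by rw [← e1]; noncomm_ring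
            _ = P * (1 + Y + (Y + 1)) := by
                rw [hPP, add_mul, one_mul, mul_add Y, mul_one, hc]
            _ = _ := by rw [two_smul]; noncomm_ring
        rw [this, smul_smul]; norm_num
      · intro j
        have hYj : Y * X j = X j * Y := by simp [hY, hXX i j]
        rw [smul_mul_assoc, mul_smul_comm]
        congr 1
        rw [mul_assoc, add_mul, one_mul, hYj, ← mul_assoc, ← hPX, mul_assoc, mul_add, mul_add, mul_add, mul_one]
      · intro j hj
        rw [Finset.mem_insert, not_or] at hj
        have hYj : Y * Z j = Z j * Y := by simp [hY, hXZ i j (Ne.symm hj.1)]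
        rw [smul_mul_assoc, mul_smul_comm]
        congr 1
        rw [mul_assoc, add_mul, one_mul, hYj, ← mul_assoc, ← hPZ j hj.2, mul_assoc, mul_add, mul_add, mul_add, mul_one]
      · rw [Finset.card_insert_of_notMem hi, Matrix.trace_smul, mul_add, Matrix.trace_add, hY,
          Matrix.mul_smul, Matrix.trace_smul c, trace_zero_of_anti P (X i) (Z i) (hPZ i hi) (hA i) (hZ i),
          ← hT]
        simp only [mul_one, smul_eq_mul, mul_zero, add_zero]
        ring
  obtain ⟨P, hPP, -, -, hT⟩ := key Finset.univ
  obtain ⟨c, hc⟩ := idem_trace_nat P hPP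
  refine ⟨c, ?_⟩
  rw [hc, Finset.card_univ] at hT
  exact_mod_cast hT.symm

end Linear

section Rep

variable {G : Type} [Group G]

theorem charOf_one {n : ℕ} (ρ : G →* GL (Fin n) ℂ) : charOf ρ 1 = n := by
  simp [charOf]

theorem irr_central {n : ℕ} (ρ : G →* GL (Fin n) ℂ) (hρ : IsIrredRep ρ)
    (hf : ∀ g, charOf ρ g = charOf ρ 1 → g = 1) (c : G) (hc : ∀ g, g * c = c * g)
    (hc2 : c * c = 1) (hc1 : c ≠ 1) : charOf ρ c = -charOf ρ 1 := by
  set C : Matrix (Fin n) (Fin n) ℂ := (ρ c : Matrix (Fin n) (Fin n) ℂ) with hC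
  have hCC : C * C = 1 := by
    rw [hC, ← Units.val_mul, ← map_mul, hc2]; simp
  have := hρ.2 (LinearMap.ker (Matrix.mulVecLin (C - 1))) (by
    intro g v hv
    simp only [LinearMap.mem_ker, Matrix.mulVecLin_apply] at hv ⊢
    have hcomm : (C - 1) * (ρ g : Matrix (Fin n) (Fin n) ℂ) = (ρ g : Matrix (Fin n) (Fin n) ℂ) * (C - 1) := by
      rw [sub_mul, mul_sub, one_mul, mul_one, hC, ← Units.val_mul, ← Units.val_mul, ← map_mul,
        ← map_mul, hc]
    rw [Matrix.mulVec_mulVec, hcomm, ← Matrix.mulVec_mulVec, hv, Matrix.mulVec_zero])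
  rcases this with h | h
  · have h1 : C + 1 = 0 := by
      apply Matrix.ext_of_mulVec_single
      intro i
      have : (C + 1) *ᵥ Pi.single i 1 ∈ LinearMap.ker (Matrix.mulVecLin (C - 1)) := by
        simp only [LinearMap.mem_ker, Matrix.mulVecLin_apply]
        rw [Matrix.mulVec_mulVec]
        have : (C - 1) * (C + 1) = 0 := by
          rw [sub_mul, mul_add, hCC]; simp [add_comm]
        rw [this, Matrix.zero_mulVec]
      rw [h, Submodule.mem_bot] at this
      rw [this, Matrix.zero_mulVec]
    have h2 : C = -1 := eq_neg_of_add_eq_zero_left h1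
    simp only [charOf, ← hC, h2]
    simp
  · exfalso
    apply hc1
    apply hf
    have : C - 1 = 0 := by
      have h3 := LinearMap.ker_eq_top.mp h
      apply Matrix.ext_of_mulVec_single
      intro i
      rw [Matrix.zero_mulVec, ← Matrix.mulVecLin_apply, h3, LinearMap.zero_apply]
    rw [sub_eq_zero] at this
    simp only [charOf, ← hC, this]
    simp

theorem rep_neg_one {n : ℕ} (ρ : G →* GL (Fin n) ℂ) (c : G) (hc2 : c * c = 1)
    (h : charOf ρ c = -charOf ρ 1) : (ρ c : Matrix (Fin n) (Fin n) ℂ) = -1 := by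
  set C : Matrix (Fin n) (Fin n) ℂ := (ρ c : Matrix (Fin n) (Fin n) ℂ) with hC
  have hCC : C * C = 1 := by
    rw [hC, ← Units.val_mul, ← map_mul, hc2]; simp
  have ht : C.trace = -n := by
    have := h
    rw [charOf_one] at this
    exact this
  have := idem_trace_zero ((1 / 2 : ℂ) • (1 + C)) (by
    rw [smul_mul_smul_comm, add_mul, one_mul, mul_add, hCC, mul_one]
    rw [show 1 + C + (C + 1) = (2 : ℂ) • (1 + C) by rw [two_smul]; abel, smul_smul]
    norm_num) (by simp [ht])
  have h3 : 1 + C = 0 := by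
    rcases smul_eq_zero.mp this with h | h
    · norm_num at h
    · exact h
  rw [add_comm] at h3
  exact eq_neg_of_add_eq_zero_left h3

end Rep

section Disc

variable {F : Type*} [Field F]

theorem exists_split {n : ℕ} (h2 : (2 : F) ≠ 0) (X Z : Matrix (Fin n) (Fin n) F)
    (hX : X * X = 1) (hA : X * Z = -(Z * X)) (hZ : IsUnit Z.det) :
    ∃ (r : ℕ) (e : Fin r ⊕ Fin r ≃ Fin n) (B : Matrix (Fin n) (Fin r) F),
      X * B = B ∧ IsUnit (((Matrix.fromCols B (Z * B)).submatrix id e.symm)).det := by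
  classical
  let V := LinearMap.ker (Matrix.mulVecLin (X - 1))
  have hV : ∀ v, v ∈ V ↔ X *ᵥ v = v := by
    intro v
    simp [V, LinearMap.mem_ker, sub_eq_zero]
  have hZu : IsUnit Z := (Matrix.isUnit_iff_isUnit_det _).mpr hZ
  have hZi : Function.Injective Z.mulVec := Matrix.mulVec_injective_iff_isUnit.mpr hZu
  have hZs : Function.Surjective Z.mulVec := Matrix.mulVec_surjective_iff_isUnit.mpr hZu
  let φ : (V × V) →ₗ[F] (Fin n → F) :=
    LinearMap.coprod V.subtype (Z.mulVecLin ∘ₗ V.subtype)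
  have hφ : ∀ u w : V, φ (u, w) = (u : Fin n → F) + Z *ᵥ (w : Fin n → F) := by
    intro u w; simp [φ]
  have hXZ : ∀ w : V, X *ᵥ (Z *ᵥ (w : Fin n → F)) = -(Z *ᵥ (w : Fin n → F)) := by
    intro w
    rw [Matrix.mulVec_mulVec, hA, Matrix.neg_mulVec, ← Matrix.mulVec_mulVec, (hV _).mp w.2]
  have hinj : Function.Injective φ := by
    rw [← LinearMap.ker_eq_bot, LinearMap.ker_eq_bot']
    rintro ⟨u, w⟩ h
    rw [hφ] at h
    have h' := congrArg (X *ᵥ ·) h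
    simp only [Matrix.mulVec_add, Matrix.mulVec_zero] at h'
    rw [hXZ, (hV _).mp u.2] at h'
    have hu : (2 : F) • (u : Fin n → F) = 0 := by
      rw [two_smul]
      calc (u : Fin n → F) + u = (u + Z *ᵥ (w : Fin n → F)) + (u + -(Z *ᵥ (w : Fin n → F))) := by abel
        _ = 0 := by rw [h, h', add_zero]
    have hu0 : (u : Fin n → F) = 0 := (smul_eq_zero.mp hu).resolve_left h2
    rw [hu0, zero_add] at h
    have hw0 : (w : Fin n → F) = 0 := hZi (by rw [h, Matrix.mulVec_zero])
    ext1
    · exact Subtype.ext hu0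
    · exact Subtype.ext hw0
  have hsurj : Function.Surjective φ := by
    intro v
    obtain ⟨w, hw⟩ := hZs ((2⁻¹ : F) • (v - X *ᵥ v))
    have hXX : X *ᵥ (X *ᵥ v) = v := by rw [Matrix.mulVec_mulVec, hX, Matrix.one_mulVec]
    have hwV : X *ᵥ w = w := by
      apply hZi
      have : Z * X = -(X * Z) := by rw [hA, neg_neg]
      show Z *ᵥ (X *ᵥ w) = Z *ᵥ w
      rw [Matrix.mulVec_mulVec, this, Matrix.neg_mulVec, ← Matrix.mulVec_mulVec]
      change -(X *ᵥ (Z.mulVec w)) = Z.mulVec w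
      rw [hw, Matrix.mulVec_smul, Matrix.mulVec_sub, hXX, ← smul_neg, neg_sub]
    refine ⟨(⟨(2⁻¹ : F) • (v + X *ᵥ v), ?_⟩, ⟨w, (hV _).mpr hwV⟩), ?_⟩
    · rw [hV, Matrix.mulVec_smul, Matrix.mulVec_add, hXX, add_comm]
    · rw [hφ]
      change (2⁻¹ : F) • (v + X *ᵥ v) + Z.mulVec w = v
      rw [hw, ← smul_add, add_add_sub_cancel, ← two_smul F, smul_smul, inv_mul_cancel₀ h2, one_smul]
  let Φ := LinearEquiv.ofBijective φ ⟨hinj, hsurj⟩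
  let b := Module.finBasis F V
  let bb := (b.prod b).map Φ
  let e := bb.indexEquiv (Pi.basisFun F (Fin n))
  refine ⟨_, e, Matrix.of (fun i j => (b j : Fin n → F) i), ?_, ?_⟩
  · ext i j
    exact congrFun ((hV _).mp (b j).2) i
  · have h1 : (Matrix.fromCols (Matrix.of (fun i j => (b j : Fin n → F) i))
        (Z * (Matrix.of (fun i j => (b j : Fin n → F) i)))).submatrix id e.symm
        = (Pi.basisFun F (Fin n)).toMatrix (bb.reindex e) := by
      ext i j
      obtain ⟨k, rfl⟩ := e.surjective j
      rw [Module.Basis.toMatrix_apply]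
      simp only [Matrix.submatrix_apply, Equiv.symm_apply_apply, id, Pi.basisFun_repr,
        Module.Basis.reindex_apply]
      rcases k with k | k
      · have hb : bb (Sum.inl k) = φ (b k, 0) := by
          simp [bb, Φ, Module.Basis.prod_apply]; rfl
        rw [hb, hφ]
        simp
      · have hb : bb (Sum.inr k) = φ (0, b k) := by
          simp [bb, Φ, Module.Basis.prod_apply]; rfl
        rw [hb, hφ]
        simp [Matrix.mul_apply, Matrix.mulVec, dotProduct]
    rw [h1]
    have := (Pi.basisFun F (Fin n)).invertibleToMatrix (bb.reindex e)
    exact (Matrix.isUnit_iff_isUnit_det _).mp (isUnit_of_invertible _)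

theorem disc_aux {n : ℕ} (h2 : (2 : F) ≠ 0) (σ : F →+* F) (hσ : ∀ x, σ (σ x) = x)
    (X Z H : Matrix (Fin n) (Fin n) F)
    (hX : X * X = 1) (hA : X * Z = -(Z * X)) (hZ : IsUnit Z.det)
    (hH : (H.map σ)ᵀ = H) (hHX : (X.map σ)ᵀ * H * X = H) (hHZ : (Z.map σ)ᵀ * H * Z = H)
    (hdet : H.det ≠ 0) : ∃ z : F, z ≠ 0 ∧ H.det = z * σ z := by
  classical
  obtain ⟨r, e, B, hXB, hT⟩ := exists_split h2 X Z hX hA hZ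
  set T := (Matrix.fromCols B (Z * B)).submatrix id e.symm with hTdef
  set D := (B.map σ)ᵀ * H * B with hD
  have mapmul : ∀ {a b c : ℕ} (M : Matrix (Fin a) (Fin b) F) (N : Matrix (Fin b) (Fin c) F),
      (M * N).map σ = M.map σ * N.map σ := fun M N => Matrix.map_mul
  have hHX' : (X.map σ)ᵀ * H = H * X := by
    calc (X.map σ)ᵀ * H = (X.map σ)ᵀ * H * X * X := by rw [mul_assoc _ X X, hX, mul_one]
      _ = _ := by rw [hHX]
  have hoff : (B.map σ)ᵀ * H * (Z * B) = 0 := by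
    have h1 : (B.map σ)ᵀ * H * (Z * B) = -((B.map σ)ᵀ * H * (Z * B)) := by
      calc (B.map σ)ᵀ * H * (Z * B) = ((X * B).map σ)ᵀ * H * (Z * B) := by rw [hXB]
        _ = (B.map σ)ᵀ * ((X.map σ)ᵀ * H) * (Z * B) := by
            rw [mapmul, Matrix.transpose_mul]; simp only [Matrix.mul_assoc]
        _ = (B.map σ)ᵀ * H * ((X * Z) * B) := by
            rw [hHX']; simp only [Matrix.mul_assoc]
        _ = -((B.map σ)ᵀ * H * (Z * (X * B))) := by
            rw [hA, Matrix.neg_mul, Matrix.mul_neg]; simp only [Matrix.mul_assoc]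
        _ = _ := by rw [hXB]
    ext i j
    have h3 := congrFun (congrFun h1 i) j
    rw [Matrix.neg_apply] at h3
    have h4 : (2 : F) * ((B.map σ)ᵀ * H * (Z * B)) i j = 0 := by linear_combination h3
    exact (mul_eq_zero.mp h4).resolve_left h2
  have hoff' : ((Z * B).map σ)ᵀ * H * B = 0 := by
    have h1 := congrArg (fun M => (Matrix.map M σ)ᵀ) hoff
    simp only [mapmul, Matrix.transpose_mul] at h1
    have h5 : (((B.map σ)ᵀ).map σ)ᵀ = B := by ext i j; simp [hσ]
    rw [h5, hH] at h1
    rw [mapmul, Matrix.transpose_mul, Matrix.mul_assoc, h1]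
    ext i j; simp
  have hlast : ((Z * B).map σ)ᵀ * H * (Z * B) = D := by
    rw [mapmul, Matrix.transpose_mul, hD]
    nth_rewrite 2 [← hHZ]
    simp only [Matrix.mul_assoc]
  have hDσ : σ D.det = D.det := by
    rw [RingHom.map_det, ← Matrix.det_transpose]
    congr 1
    rw [hD, RingHom.mapMatrix_apply, mapmul, mapmul, Matrix.transpose_mul, Matrix.transpose_mul, hH]
    have h5 : (((B.map σ)ᵀ).map σ)ᵀ = B := by ext i j; simp [hσ]
    rw [h5, Matrix.mul_assoc]
  have hblock : (T.map σ)ᵀ * H * T = (Matrix.fromBlocks D 0 0 D).submatrix e.symm e.symm := by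
    have h6 : (Matrix.fromCols B (Z * B)).map σ = Matrix.fromCols (B.map σ) ((Z * B).map σ) := by
      ext i j; rcases j with j | j <;> rfl
    have h7 : (T.map σ)ᵀ * H * T = (((Matrix.fromCols B (Z * B)).map σ)ᵀ * H *
        (Matrix.fromCols B (Z * B))).submatrix e.symm e.symm := by
      rfl
    rw [h7, h6, Matrix.transpose_fromCols, Matrix.fromRows_mul, Matrix.fromRows_mul_fromCols,
      hoff, hoff', hlast]
  have hdets : σ T.det * H.det * T.det = D.det * D.det := by
    have h8 := congrArg Matrix.det hblock
    rw [Matrix.det_mul, Matrix.det_mul, Matrix.det_transpose, Matrix.det_submatrix_equiv_self,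
      Matrix.det_fromBlocks_zero₂₁] at h8
    rw [← h8, RingHom.map_det, RingHom.mapMatrix_apply]
  have hTd : T.det ≠ 0 := hT.ne_zero
  have hσT : σ T.det ≠ 0 := (map_ne_zero σ).mpr hTd
  have hD0 : D.det ≠ 0 := by
    intro h0
    rw [h0, mul_zero] at hdets
    exact (mul_ne_zero (mul_ne_zero hσT hdet) hTd) hdets
  refine ⟨D.det / T.det, div_ne_zero hD0 hTd, ?_⟩
  rw [map_div₀, hDσ]
  field_simp
  linear_combination hdets

end Disc

section Build

open scoped Kronecker

/-- Gram matrix of the hyperbolic form in dimension four. -/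
def J4 (F : Type*) [Field F] : Matrix (Fin 4) (Fin 4) F :=
  !![0, 1, 0, 0; 1, 0, 0, 0; 0, 0, 0, 1; 0, 0, 1, 0]

variable {F : Type*} [Field F]

/-- First elements of the two quaternion groups acting on 2 by 2 matrices. -/
def BX (F : Type*) [Field F] : Bool → Matrix (Fin 4) (Fin 4) F
  | true => !![0, 0, 0, 1; 0, 0, 1, 0; 0, -1, 0, 0; -1, 0, 0, 0]
  | false => !![0, 0, 1, 0; 0, 0, 0, 1; -1, 0, 0, 0; 0, -1, 0, 0]

/-- Second elements of the two quaternion groups. -/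
def BZ (s t : F) : Bool → Matrix (Fin 4) (Fin 4) F
  | true => !![s, 0, 0, t; 0, -s, -t, 0; 0, -t, s, 0; t, 0, 0, -s]
  | false => !![s, 0, -t, 0; 0, -s, 0, t; -t, 0, -s, 0; 0, t, 0, s]

theorem BX_sq (b : Bool) : BX F b * BX F b = -1 := by
  cases b <;> ext i j <;> fin_cases i <;> fin_cases j <;>
    simp [BX, Matrix.mul_apply, Fin.sum_univ_four]

theorem BX_comm (b c : Bool) : BX F b * BX F c = BX F c * BX F b := by
  cases b <;> cases c <;> ext i j <;> fin_cases i <;> fin_cases j <;>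
    simp [BX, Matrix.mul_apply, Fin.sum_univ_four]

theorem BXZ_comm (s t : F) (b c : Bool) (h : b ≠ c) : BX F b * BZ s t c = BZ s t c * BX F b := by
  cases b <;> cases c <;> first | exact absurd rfl h | skip
  all_goals ext i j; fin_cases i <;> fin_cases j <;>
    simp [BX, BZ, Matrix.mul_apply, Fin.sum_univ_four]

theorem BXZ_anti (s t : F) (b : Bool) : BX F b * BZ s t b = -(BZ s t b * BX F b) := by
  cases b <;> ext i j <;> fin_cases i <;> fin_cases j <;>
    simp [BX, BZ, Matrix.mul_apply, Fin.sum_univ_four]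

theorem BX_form (b : Bool) : (BX F b)ᵀ * J4 F * BX F b = J4 F := by
  cases b <;> ext i j <;> fin_cases i <;> fin_cases j <;>
    simp [BX, J4, Matrix.mul_apply, Fin.sum_univ_four]

theorem BZ_form (s t : F) (h : s ^ 2 + t ^ 2 = -1) (b : Bool) :
    (BZ s t b)ᵀ * J4 F * BZ s t b = J4 F := by
  cases b <;> ext i j <;> fin_cases i <;> fin_cases j <;>
    simp [BZ, J4, Matrix.mul_apply, Fin.sum_univ_four] <;> first | ring1 | linear_combination -h

theorem BX_det (b : Bool) : (BX F b).det = 1 := by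
  cases b
  · simp [BX, Matrix.det_succ_row_zero, Fin.sum_univ_succ, Fin.succAbove]
  · simp [BX, Matrix.det_succ_row_zero, Fin.sum_univ_succ, Fin.succAbove]
    norm_num

theorem BZ_det (s t : F) (h : s ^ 2 + t ^ 2 = -1) (b : Bool) : (BZ s t b).det = 1 := by
  cases b <;> simp [BZ, Matrix.det_succ_row_zero, Fin.sum_univ_succ, Fin.succAbove] <;>
    linear_combination (s ^ 2 + t ^ 2 - 1) * h

variable (e a : ℕ)

/-- Index set for the outer tensor factors. -/
abbrev UU (e a : ℕ) : Type := (Fin e → ZMod 2) × Fin a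

/-- Translation of the index set. -/
def flipU (i : Fin e) (u : UU e a) : UU e a := (u.1 + Pi.single i 1, u.2)

theorem flipU_flipU (i : Fin e) (u : UU e a) : flipU e a i (flipU e a i u) = u := by
  ext1
  · simp only [flipU]
    funext k
    simp only [Pi.add_apply]
    rw [add_assoc, CharTwo.add_self_eq_zero, add_zero]
  · rfl

theorem flipU_comm (i j : Fin e) (u : UU e a) :
    flipU e a i (flipU e a j u) = flipU e a j (flipU e a i u) := by
  simp only [flipU]
  rw [add_right_comm]

/-- Shift matrix. -/
def AX (F : Type*) [Field F] (i : Fin e) : Matrix (UU e a) (UU e a) F :=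
  Matrix.of fun u v => if v = flipU e a i u then 1 else 0

/-- Sign of an element modulo two. -/
def sgn2 (F : Type*) [Field F] (x : ZMod 2) : F := if x = 0 then 1 else -1

theorem sgn2_sq (x : ZMod 2) : sgn2 F x * sgn2 F x = 1 := by
  unfold sgn2; split_ifs <;> simp

theorem sgn2_add (x : ZMod 2) : sgn2 F (x + 1) = - sgn2 F x := by
  have : ∀ x : ZMod 2, x = 0 ∨ x = 1 := by decide
  rcases this x with rfl | rfl
  · simp [sgn2]
  · simp [sgn2, show (1 : ZMod 2) + 1 = 0 from rfl]

/-- Sign matrix. -/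
def AZ (F : Type*) [Field F] (i : Fin e) : Matrix (UU e a) (UU e a) F :=
  Matrix.diagonal fun u => sgn2 F (u.1 i)

theorem AX_mul (i : Fin e) (M : Matrix (UU e a) (UU e a) F) (u v : UU e a) :
    (AX e a F i * M) u v = M (flipU e a i u) v := by
  simp [AX, Matrix.mul_apply]

theorem AX_comm (i j : Fin e) : AX e a F i * AX e a F j = AX e a F j * AX e a F i := by
  ext u v
  rw [AX_mul, AX_mul]
  simp only [AX, Matrix.of_apply, flipU_comm e a i j]

theorem AX_sq (i : Fin e) : AX e a F i * AX e a F i = 1 := by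
  ext u v
  rw [AX_mul]
  simp only [AX, Matrix.of_apply, flipU_flipU, Matrix.one_apply, eq_comm]

theorem AX_tr (i : Fin e) : (AX e a F i)ᵀ = AX e a F i := by
  ext u v
  simp only [AX, Matrix.of_apply, Matrix.transpose_apply]
  congr 1
  apply propext
  constructor
  · rintro rfl; rw [flipU_flipU]
  · rintro rfl; rw [flipU_flipU]

theorem AZ_tr (i : Fin e) : (AZ e a F i)ᵀ = AZ e a F i := by
  simp [AZ]

theorem AZ_sq (i : Fin e) : AZ e a F i * AZ e a F i = 1 := by
  simp [AZ, sgn2_sq]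

theorem AXZ_comm (i j : Fin e) (h : i ≠ j) : AX e a F i * AZ e a F j = AZ e a F j * AX e a F i := by
  ext u v
  rw [AX_mul]
  simp only [AZ, Matrix.diagonal_mul, AX, Matrix.of_apply, Matrix.diagonal_apply]
  by_cases hv : v = flipU e a i u
  · subst hv; simp [flipU, h.symm]
  · simp [hv, Ne.symm hv]

theorem AXZ_anti (i : Fin e) : AX e a F i * AZ e a F i = -(AZ e a F i * AX e a F i) := by
  ext u v
  rw [AX_mul]
  simp only [AZ, Matrix.diagonal_mul, AX, Matrix.of_apply, Matrix.diagonal_apply, Matrix.neg_apply]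
  by_cases hv : v = flipU e a i u
  · subst hv; simp [flipU, sgn2_add]
  · simp [hv, Ne.symm hv]

/-- The commuting family. -/
def MX (F : Type*) [Field F] : Bool ⊕ Fin e → Matrix (UU e a × Fin 4) (UU e a × Fin 4) F
  | Sum.inl b => (1 : Matrix (UU e a) (UU e a) F) ⊗ₖ BX F b
  | Sum.inr i => AX e a F i ⊗ₖ (1 : Matrix (Fin 4) (Fin 4) F)

/-- The dual family. -/
def MZ (s t : F) : Bool ⊕ Fin e → Matrix (UU e a × Fin 4) (UU e a × Fin 4) F
  | Sum.inl b => (1 : Matrix (UU e a) (UU e a) F) ⊗ₖ BZ s t b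
  | Sum.inr i => AZ e a F i ⊗ₖ (1 : Matrix (Fin 4) (Fin 4) F)

theorem neg_kron (A : Matrix (UU e a) (UU e a) F) (B : Matrix (Fin 4) (Fin 4) F) :
    (-A) ⊗ₖ B = -(A ⊗ₖ B) := by
  ext i j; simp [Matrix.kroneckerMap_apply]

theorem kron_neg (A : Matrix (UU e a) (UU e a) F) (B : Matrix (Fin 4) (Fin 4) F) :
    A ⊗ₖ (-B) = -(A ⊗ₖ B) := by
  ext i j; simp [Matrix.kroneckerMap_apply]

theorem MX_comm (i j : Bool ⊕ Fin e) : MX e a F i * MX e a F j = MX e a F j * MX e a F i := by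
  rcases i with b | i <;> rcases j with c | j <;>
    simp only [MX, ← Matrix.mul_kronecker_mul, mul_one, one_mul]
  · rw [BX_comm]
  · rw [AX_comm]

theorem MXZ_comm (s t : F) (i j : Bool ⊕ Fin e) (h : i ≠ j) :
    MX e a F i * MZ e a s t j = MZ e a s t j * MX e a F i := by
  rcases i with b | i <;> rcases j with c | j <;>
    simp only [MX, MZ, ← Matrix.mul_kronecker_mul, mul_one, one_mul]
  · rw [BXZ_comm]; rintro rfl; exact h rfl
  · rw [AXZ_comm]; rintro rfl; exact h rfl

theorem MXZ_anti (s t : F) (i : Bool ⊕ Fin e) :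
    MX e a F i * MZ e a s t i = -(MZ e a s t i * MX e a F i) := by
  rcases i with b | i <;>
    simp only [MX, MZ, ← Matrix.mul_kronecker_mul, mul_one, one_mul]
  · rw [BXZ_anti, kron_neg]
  · rw [AXZ_anti, neg_kron]

theorem MX_sq (i : Bool ⊕ Fin e) : MX e a F i * MX e a F i = 1 ∨ MX e a F i * MX e a F i = -1 := by
  rcases i with b | i <;>
    simp only [MX, ← Matrix.mul_kronecker_mul, mul_one, one_mul]
  · right; rw [BX_sq, kron_neg, Matrix.one_kronecker_one]
  · left; rw [AX_sq, Matrix.one_kronecker_one]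

theorem MX_sq_inl (b : Bool) : MX e a F (Sum.inl b) * MX e a F (Sum.inl b) = -1 := by
  simp only [MX, ← Matrix.mul_kronecker_mul, mul_one]
  rw [BX_sq, kron_neg, Matrix.one_kronecker_one]

/-- Membership in the special orthogonal group. -/
def Good (M : Matrix (UU e a × Fin 4) (UU e a × Fin 4) F) : Prop :=
  M.det = 1 ∧ Mᵀ * ((1 : Matrix (UU e a) (UU e a) F) ⊗ₖ J4 F) * M
    = (1 : Matrix (UU e a) (UU e a) F) ⊗ₖ J4 F

theorem good_inl (B : Matrix (Fin 4) (Fin 4) F) (h : B.det = 1) (hJ : Bᵀ * J4 F * B = J4 F) :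
    Good e a ((1 : Matrix (UU e a) (UU e a) F) ⊗ₖ B) := by
  constructor
  · rw [Matrix.det_kronecker, h]; simp
  · rw [← Matrix.kroneckerMap_transpose, ← Matrix.mul_kronecker_mul, ← Matrix.mul_kronecker_mul, hJ]
    simp

theorem good_inr (A : Matrix (UU e a) (UU e a) F) (h : A * A = 1) (hT : Aᵀ = A) :
    Good e a (A ⊗ₖ (1 : Matrix (Fin 4) (Fin 4) F)) := by
  constructor
  · rw [Matrix.det_kronecker]
    have : A.det * A.det = 1 := by rw [← Matrix.det_mul, h, Matrix.det_one]
    simp only [Matrix.det_one, one_pow, mul_one, Fintype.card_fin]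
    linear_combination (A.det * A.det + 1) * this
  · rw [← Matrix.kroneckerMap_transpose, ← Matrix.mul_kronecker_mul, ← Matrix.mul_kronecker_mul, hT,
      mul_one, h]
    simp

theorem good_MX (i : Bool ⊕ Fin e) : Good e a (MX e a F i) := by
  rcases i with b | i
  · exact good_inl e a _ (BX_det b) (BX_form b)
  · exact good_inr e a _ (AX_sq e a i) (AX_tr e a i)

theorem good_MZ (s t : F) (h : s ^ 2 + t ^ 2 = -1) (i : Bool ⊕ Fin e) : Good e a (MZ e a s t i) := by
  rcases i with b | i
  · exact good_inl e a _ (BZ_det s t h b) (BZ_form s t h b)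
  · exact good_inr e a _ (AZ_sq e a i) (AZ_tr e a i)

/-- The index bijection. -/
def idx (half : ℕ) (h : 2 * half = 2 ^ (e + 2) * a) : UU e a × Fin 4 ≃ Fin (2 * half) :=
  ((Fintype.equivFinOfCardEq (α := UU e a) (n := 2 ^ e * a) (by simp [ZMod.card])).prodCongr
    (Equiv.refl (Fin 4))).trans (finProdFinEquiv.trans (finCongr (by rw [h]; ring)))

theorem Qform_eq (p half : ℕ) (h : 2 * half = 2 ^ (e + 2) * a) (x : Fin (2 * half) → ZMod p) :
    Qform p half x = ∑ u : UU e a,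
      (x (idx e a half h (u, 0)) * x (idx e a half h (u, 1)) +
       x (idx e a half h (u, 2)) * x (idx e a half h (u, 3))) := by
  have hh : 2 ^ e * a * 2 = half := by
    have : 2 * (2 ^ e * a * 2) = 2 * half := by rw [h]; ring
    omega
  unfold Qform
  rw [← Equiv.sum_comp (finProdFinEquiv.trans (finCongr hh)), Fintype.sum_prod_type]
  rw [← Equiv.sum_comp (Fintype.equivFinOfCardEq (α := UU e a) (n := 2 ^ e * a) (by simp [ZMod.card]))]
  apply Finset.sum_congr rfl
  intro u _
  rw [Fin.sum_univ_two]
  congr 1 <;> congr 2 <;> apply Fin.ext <;> simp [idx, finProdFinEquiv] <;> omega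

theorem kron_dot {U K : Type*} [Fintype U] [DecidableEq U] [Field K] (J : Matrix (Fin 4) (Fin 4) K)
    (y : U × Fin 4 → K) : y ⬝ᵥ (((1 : Matrix U U K) ⊗ₖ J) *ᵥ y) =
      ∑ u, ∑ i, y (u, i) * ∑ j, J i j * y (u, j) := by
  rw [dotProduct, Fintype.sum_prod_type]
  apply Finset.sum_congr rfl
  intro u _
  apply Finset.sum_congr rfl
  intro i _
  congr 1
  rw [Matrix.mulVec, dotProduct, Fintype.sum_prod_type, Finset.sum_eq_single u]
  · simp [Matrix.kroneckerMap_apply]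
  · intro v _ hv
    simp [Matrix.kroneckerMap_apply, Matrix.one_apply_ne hv.symm]
  · simp

theorem Qform_dot (p half : ℕ) [Fact p.Prime] (h : 2 * half = 2 ^ (e + 2) * a)
    (x : Fin (2 * half) → ZMod p) :
    2 * Qform p half x = (x ∘ idx e a half h) ⬝ᵥ
      (((1 : Matrix (UU e a) (UU e a) (ZMod p)) ⊗ₖ J4 (ZMod p)) *ᵥ (x ∘ idx e a half h)) := by
  rw [Qform_eq e a p half h, Finset.mul_sum, kron_dot]
  apply Finset.sum_congr rfl
  intro u _
  simp [Fin.sum_univ_four, J4]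
  ring

theorem good_Qform (p half : ℕ) [Fact p.Prime] (hp : Odd p) (h : 2 * half = 2 ^ (e + 2) * a)
    (M : Matrix (UU e a × Fin 4) (UU e a × Fin 4) (ZMod p)) (hM : Good e a M)
    (x : Fin (2 * half) → ZMod p) :
    Qform p half ((Matrix.reindex (idx e a half h) (idx e a half h) M) *ᵥ x) = Qform p half x := by
  have h2 : (2 : ZMod p) ≠ 0 := by
    apply Ring.two_ne_zero
    rw [ZMod.ringChar_zmod_n]
    rintro rfl
    exact absurd hp (by decide)
  apply mul_left_cancel₀ h2
  rw [Qform_dot e a p half h, Qform_dot e a p half h]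
  have : (Matrix.reindex (idx e a half h) (idx e a half h) M *ᵥ x) ∘ idx e a half h
      = M *ᵥ (x ∘ idx e a half h) := by
    ext u
    simp only [Function.comp, Matrix.mulVec, dotProduct, Matrix.reindex_apply,
      Matrix.submatrix_apply, Equiv.symm_apply_apply]
    rw [← Equiv.sum_comp (idx e a half h)]
    simp
  rw [this]
  conv_rhs => rw [← hM.2]
  rw [← Matrix.mulVec_mulVec, ← Matrix.mulVec_mulVec, Matrix.dotProduct_mulVec _ Mᵀ,
    Matrix.vecMul_transpose]

end Build

theorem disc_sub {G : Type} [Group G] (L : Subfield ℂ) (τ : ℂ →+* ℂ) (hτL : ∀ y ∈ L, τ y ∈ L)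
    (hτ : ∀ y, τ (τ y) = y) {n : ℕ} (ρ : G →* GL (Fin n) ℂ)
    (hent : ∀ g i j, ((ρ g : Matrix (Fin n) (Fin n) ℂ)) i j ∈ L)
    (c : G) (hc : (ρ c : Matrix (Fin n) (Fin n) ℂ) = -1) (x y z : G)
    (hx : x * x = c) (hy : y * y = c) (hxy : x * y = y * x) (hxz : x * z = c * (z * x))
    (hyz : y * z = z * y) (H : Matrix (Fin n) (Fin n) ℂ) (hH : ∀ i j, H i j ∈ L)
    (hu : IsUnit H.det) (hs : (H.map τ)ᵀ = H)
    (hinv : ∀ g, ((ρ g : Matrix (Fin n) (Fin n) ℂ).map τ)ᵀ * H *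
        (ρ g : Matrix (Fin n) (Fin n) ℂ) = H) :
    ∃ w ∈ L, w ≠ 0 ∧ H.det = 1 * (w * τ w) := by
  have hm : ∀ g h : G, (ρ (g * h) : Matrix (Fin n) (Fin n) ℂ)
      = (ρ g : Matrix (Fin n) (Fin n) ℂ) * (ρ h : Matrix (Fin n) (Fin n) ℂ) := by
    intro g h; rw [map_mul]; rfl
  let R : G → Matrix (Fin n) (Fin n) L := fun g => Matrix.of fun i j => ⟨_, hent g i j⟩
  let H' : Matrix (Fin n) (Fin n) L := Matrix.of fun i j => ⟨_, hH i j⟩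
  let σ : L →+* L := (τ.comp L.subtype).codRestrict L (fun y => hτL _ y.2)
  have inj : ∀ M N : Matrix (Fin n) (Fin n) L, M.map L.subtype = N.map L.subtype → M = N := by
    intro M N h
    ext i j
    exact congrFun (congrFun h i) j
  have hR : ∀ g, (R g).map L.subtype = (ρ g : Matrix (Fin n) (Fin n) ℂ) := fun g => rfl
  have hH' : H'.map L.subtype = H := rfl
  have mm : ∀ M N : Matrix (Fin n) (Fin n) L,
      (M * N).map L.subtype = M.map L.subtype * N.map L.subtype := fun M N => Matrix.map_mul
  have mn : ∀ M : Matrix (Fin n) (Fin n) L,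
      (-M).map L.subtype = -(M.map L.subtype) := fun M => rfl
  have ms : ∀ M : Matrix (Fin n) (Fin n) L,
      ((M.map σ)ᵀ).map L.subtype = ((M.map L.subtype).map τ)ᵀ := fun M => rfl
  have m1 : (1 : Matrix (Fin n) (Fin n) L).map L.subtype = 1 := by simp
  have hRm : ∀ g h, R (g * h) = R g * R h := by
    intro g h; apply inj; rw [mm, hR, hR, hR, hm]
  have hRc : R c = -1 := by apply inj; rw [hR, mn, m1, hc]
  have hdet : L.subtype H'.det = H.det := by rw [RingHom.map_det]; rfl
  obtain ⟨w, hw0, hw⟩ := disc_aux (F := L) two_ne_zero σ (fun v => Subtype.ext (hτ v))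
    (R (x * y)) (R z) H'
    (by
      rw [← hRm, show x * y * (x * y) = c * c by
        rw [← hx]
        nth_rewrite 2 [hx]
        rw [← hy, mul_assoc, ← mul_assoc y x y, ← hxy, mul_assoc, mul_assoc, ← mul_assoc x x], hRm, hRc]
      simp)
    (by
      rw [← hRm, show x * y * z = c * (z * (x * y)) by
        rw [mul_assoc, hyz, ← mul_assoc, hxz]; simp only [mul_assoc], hRm, hRc, neg_one_mul, hRm z])
    (by
      have : R z * R z⁻¹ = 1 := by
        apply inj; rw [← hRm, mul_inv_cancel, hR, m1]; simp
      exact IsUnit.of_mul_eq_one _ (by rw [← Matrix.det_mul, this, Matrix.det_one]))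
    (by apply inj; rw [ms, hH', hs])
    (by apply inj; rw [mm, mm, ms, hH', hR, hinv])
    (by apply inj; rw [mm, mm, ms, hH', hR, hinv])
    (by
      intro h
      rw [h, map_zero] at hdet
      exact hu.ne_zero hdet.symm)
  refine ⟨w, w.2, fun h => hw0 (Subtype.ext h), ?_⟩
  rw [← hdet, hw, one_mul]
  rfl

/-- a generalisation of the `Q₈`-trick. -/
theorem stmt17 (d a p k : ℕ) (hd : 2 ≤ d) (ha : 1 ≤ a) (hp : p.Prime) (hpodd : Odd p)
    (hk : 0 < k) (half : ℕ) (hhalf : 2 * half = 2 ^ d * a)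
    (Fq : Type) [Field Fq] [Fintype Fq] [CharP Fq p] (hFq : Fintype.card Fq = p ^ k)
    (G : Subgroup (GL (Fin (2 * half)) Fq))
    (hG : ∀ g : Matrix.SpecialLinearGroup (Fin (2 * half)) (ZMod p),
      (∀ x, Qform p half ((g : Matrix (Fin (2 * half)) (Fin (2 * half)) (ZMod p)).mulVec x)
          = Qform p half x) →
      Matrix.SpecialLinearGroup.toGL
        (Matrix.SpecialLinearGroup.map (ZMod.castHom (dvd_refl p) Fq) g) ∈ G)
    (χ : ↥G → ℂ) (hχ : IsIrrChar χ)
    (hfaithful : ∀ g : ↥G, χ g = χ 1 → g = 1) :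
    (∃ c : ℕ, χ 1 = ((2 ^ d * c : ℕ) : ℂ)) ∧
    (charField χ ≤ realsIn → FSind χ = 1 → HasOrthDisc χ 1) ∧
    (NotReal χ → HasUnitaryDisc χ 1) := by
  have : Fact p.Prime := ⟨hp⟩
  obtain ⟨e, rfl⟩ : ∃ e, d = e + 2 := ⟨d - 2, by omega⟩
  obtain ⟨s, t, hst⟩ := ZMod.sq_add_sq p (-1)
  have hp2 : (2 : Fq) ≠ 0 := by
    apply Ring.two_ne_zero
    rw [ringChar.eq Fq p]
    rintro rfl
    exact absurd hpodd (by decide)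
  let φ : Matrix (UU e a × Fin 4) (UU e a × Fin 4) (ZMod p) →+*
      Matrix (Fin (2 * half)) (Fin (2 * half)) Fq :=
    ((ZMod.castHom (dvd_refl p) Fq).mapMatrix).comp
      (Matrix.reindexAlgEquiv (ZMod p) (ZMod p) (idx e a half hhalf)).toRingHom
  have lift : ∀ M, Good e a M → ∃ g : ↥G,
      ((g : GL (Fin (2 * half)) Fq) : Matrix (Fin (2 * half)) (Fin (2 * half)) Fq) = φ M := by
    intro M hM
    exact ⟨⟨_, hG ⟨Matrix.reindex (idx e a half hhalf) (idx e a half hhalf) M, by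
      rw [Matrix.det_reindex_self, hM.1]⟩ (fun x => good_Qform e a p half hpodd hhalf M hM x)⟩, rfl⟩
  choose x hx using fun i => lift _ (good_MX (F := ZMod p) e a i)
  choose z hz using fun i => lift _ (good_MZ (F := ZMod p) e a s t hst i)
  have gext : ∀ g h : ↥G, ((g : GL (Fin (2 * half)) Fq) : Matrix (Fin (2 * half)) (Fin (2 * half)) Fq)
      = ((h : GL (Fin (2 * half)) Fq) : Matrix (Fin (2 * half)) (Fin (2 * half)) Fq) → g = h :=
    fun g h hgh => Subtype.ext (Units.ext hgh)
  have gmul : ∀ g h : ↥G, (((g * h : ↥G) : GL (Fin (2 * half)) Fq) : Matrix (Fin (2 * half)) (Fin (2 * half)) Fq)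
      = ((g : GL (Fin (2 * half)) Fq) : Matrix (Fin (2 * half)) (Fin (2 * half)) Fq) * ((h : GL (Fin (2 * half)) Fq) : Matrix (Fin (2 * half)) (Fin (2 * half)) Fq) :=
    fun g h => rfl
  have gone : (((1 : ↥G) : GL (Fin (2 * half)) Fq) : Matrix (Fin (2 * half)) (Fin (2 * half)) Fq) = 1 := rfl
  obtain ⟨c, hcdef⟩ : ∃ c : ↥G, c = x (Sum.inl true) * x (Sum.inl true) := ⟨_, rfl⟩
  have hc : ((c : GL (Fin (2 * half)) Fq) : Matrix (Fin (2 * half)) (Fin (2 * half)) Fq) = -1 := by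
    rw [hcdef, gmul, hx, ← map_mul, MX_sq_inl, map_neg, map_one]
  have hcc : ∀ g, g * c = c * g := fun g => gext _ _ (by rw [gmul, gmul, hc]; simp)
  have hc2 : c * c = 1 := gext _ _ (by rw [gmul, hc, gone]; simp)
  have hc1 : c ≠ 1 := by
    intro h
    rw [h, gone] at hc
    have hpos : 0 < 2 * half := by rw [hhalf]; positivity
    have := congrFun (congrFun hc ⟨0, hpos⟩) ⟨0, hpos⟩
    simp only [Matrix.one_apply_eq, Matrix.neg_apply] at this
    apply hp2
    linear_combination this
  have rXX : ∀ i j, x i * x j = x j * x i := fun i j =>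
    gext _ _ (by rw [gmul, gmul, hx, hx, ← map_mul, MX_comm, map_mul])
  have rXZ : ∀ i j, i ≠ j → x i * z j = z j * x i := fun i j hij =>
    gext _ _ (by rw [gmul, gmul, hx, hz, ← map_mul, MXZ_comm _ _ _ _ _ _ hij, map_mul])
  have rA : ∀ i, x i * z i = c * (z i * x i) := fun i =>
    gext _ _ (by rw [gmul, gmul, gmul, hc, hx, hz, ← map_mul, MXZ_anti, map_neg, map_mul]; simp)
  have rX2 : ∀ i, x i * x i = 1 ∨ x i * x i = c := fun i => by
    rcases MX_sq (F := ZMod p) e a i with h | h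
    · exact Or.inl (gext _ _ (by rw [gmul, hx, ← map_mul, h, map_one, gone]))
    · exact Or.inr (gext _ _ (by rw [gmul, hx, ← map_mul, h, map_neg, map_one, hc]))
  have rX2b : x (Sum.inl false) * x (Sum.inl false) = c :=
    gext _ _ (by rw [gmul, hx, ← map_mul, MX_sq_inl, map_neg, map_one, hc])
  have hχc : χ c = -χ 1 := by
    obtain ⟨n, ρ, hρ, rfl⟩ := hχ
    exact irr_central ρ hρ hfaithful c hcc hc2 hc1
  have main : ∀ (n : ℕ) (ρ : ↥G →* GL (Fin n) ℂ), χ = charOf ρ →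
      (∃ b : ℕ, n = 2 ^ (e + 2) * b) ∧
      (ρ c : Matrix (Fin n) (Fin n) ℂ) = -1 := by
    intro n ρ hρ
    have hρc : (ρ c : Matrix (Fin n) (Fin n) ℂ) = -1 :=
      rep_neg_one ρ c hc2 (by rw [← hρ]; exact hχc)
    refine ⟨?_, hρc⟩
    have hm : ∀ g h : ↥G, (ρ (g * h) : Matrix (Fin n) (Fin n) ℂ)
      = (ρ g : Matrix (Fin n) (Fin n) ℂ) * (ρ h : Matrix (Fin n) (Fin n) ℂ) := by
      intro g h; rw [map_mul]; rfl
    have := pow_dvd_of_family (fun i => (ρ (x i) : Matrix (Fin n) (Fin n) ℂ))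
      (fun i => (ρ (z i) : Matrix (Fin n) (Fin n) ℂ))
      (fun i j => by simp only [← hm, rXX i j])
      (fun i j hij => by simp only [← hm, rXZ i j hij])
      (fun i => by simp only [← hm, rA i]; rw [hm, hρc, neg_one_mul])
      (fun i => (ρ (z i)).isUnit)
      (fun i => by
        rcases rX2 i with h | h
        · left; simp only [← hm, h]; simp
        · right; simp only [← hm, h]; exact hρc)
    have hcard : Fintype.card (Bool ⊕ Fin e) = e + 2 := by simp [add_comm]
    rwa [hcard] at this
  have sign : ∀ (n b : ℕ), n = 2 ^ (e + 2) * b → (-1 : ℂ) ^ (n * (n - 1) / 2) = 1 := by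
    intro n b hn
    apply Even.neg_one_pow
    obtain ⟨k, hk⟩ : ∃ k, n = 4 * k := ⟨2 ^ e * b, by rw [hn]; ring⟩
    refine ⟨k * (n - 1), ?_⟩
    have h4 : n * (n - 1) = 2 * (2 * (k * (n - 1))) := by
      nth_rewrite 1 [hk]; ring
    rw [h4, Nat.mul_div_cancel_left _ (by norm_num)]; ring
  refine ⟨?_, ?_, ?_⟩
  · obtain ⟨n, ρ, hρ, h⟩ := hχ
    obtain ⟨⟨b, hb⟩, -⟩ := main n ρ h
    exact ⟨b, by rw [h, charOf_one, ← hb]⟩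
  · intro _ _ n ρ hρ hent H hHent hHu hHs hHinv
    obtain ⟨⟨b, hb⟩, hρc⟩ := main n ρ hρ
    obtain ⟨w, hwL, hw0, hw⟩ := disc_sub (charField χ) (RingHom.id ℂ) (fun y hy => hy) (fun y => rfl)
      ρ hent c hρc (x (Sum.inl true)) (x (Sum.inl false)) (z (Sum.inl true)) hcdef.symm rX2b (rXX _ _)
      (rA _) (rXZ _ _ (by simp)) H hHent hHu (by simpa using hHs)
      (fun g => by simpa using hHinv g)
    refine ⟨w, hwL, hw0, ?_⟩
    rw [sign n b hb, hw]
    simp [sq]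
  · intro _ n ρ hρ hent H hHent hHu hHs hHinv
    obtain ⟨⟨b, hb⟩, hρc⟩ := main n ρ hρ
    have hconj : ∀ y ∈ charField χ, (starRingEnd ℂ) y ∈ charField χ := by
      have hle : charField χ ≤ (charField χ).comap (starRingEnd ℂ) := by
        unfold charField
        rw [Subfield.closure_le]
        rintro _ ⟨g, rfl⟩
        rw [SetLike.mem_coe, Subfield.mem_comap]
        have hg : (starRingEnd ℂ) (χ g) = χ g⁻¹ := by
          rw [hρ]
          simp only [charOf]
          have h1 := hHinv g⁻¹
          have h2 : (ρ g : Matrix (Fin n) (Fin n) ℂ) * (ρ g⁻¹ : Matrix (Fin n) (Fin n) ℂ) = 1 := by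
            rw [← Units.val_mul, ← map_mul]; simp
          have h3 : H * (ρ g⁻¹ : Matrix (Fin n) (Fin n) ℂ)
              = (ρ g : Matrix (Fin n) (Fin n) ℂ).conjTranspose * H := by
            have h4 := congrArg (· * (ρ g⁻¹ : Matrix (Fin n) (Fin n) ℂ)) (hHinv g)
            simp only [Matrix.mul_assoc, h2, Matrix.mul_one] at h4
            exact h4.symm
          have hHH : H⁻¹ * H = 1 := Matrix.nonsing_inv_mul _ hHu
          have hHH' : H * H⁻¹ = 1 := Matrix.mul_nonsing_inv _ hHu
          calc (starRingEnd ℂ) (ρ g : Matrix (Fin n) (Fin n) ℂ).trace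
              = ((ρ g : Matrix (Fin n) (Fin n) ℂ).conjTranspose).trace := by
                rw [Matrix.trace_conjTranspose]; rfl
            _ = ((ρ g : Matrix (Fin n) (Fin n) ℂ).conjTranspose * H * H⁻¹).trace := by
                rw [Matrix.mul_assoc, hHH', Matrix.mul_one]
            _ = (H * (ρ g⁻¹ : Matrix (Fin n) (Fin n) ℂ) * H⁻¹).trace := by rw [h3]
            _ = _ := by
                rw [Matrix.trace_mul_comm, ← Matrix.mul_assoc, hHH, Matrix.one_mul]
        rw [hg]
        exact Subfield.subset_closure ⟨_, rfl⟩
      exact fun y hy => hle hy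
    obtain ⟨w, hwL, hw0, hw⟩ := disc_sub (charField χ) (starRingEnd ℂ) hconj
      (fun y => Complex.conj_conj y)
      ρ hent c hρc (x (Sum.inl true)) (x (Sum.inl false)) (z (Sum.inl true)) hcdef.symm rX2b (rXX _ _)
      (rA _) (rXZ _ _ (by simp)) H hHent hHu hHs (fun g => hHinv g)
    refine ⟨w, hwL, hw0, ?_⟩
    rw [sign n b hb, hw, one_mul]

end Paper
end
end

section
/- Let G be a finite 2-group and let χ be an irreducible complex character of G with ℚ(χ) = ℚ whose degree n := χ(1) is divisible by 4. Then: (i) for every totally complex number field L with maximal real subfield K, every representation ρ : G → GL_n(L) with character χ and every nondegenerate invariant Hermitian form H for ρ, one has (−1)^{n(n−1)/2}·det(H) ∈ N_{L/K}(L^×); (ii) for every totally real number field F, every representation ρ : G → GL_n(F) with character χ and every symmetric matrix H ∈ GL_n(F) with ρ(g)ᵀ·H·ρ(g) = H for all g ∈ G, one has (−1)^{n(n−1)/2}·det(H) ∈ (F^×)². -/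
open Matrix

noncomputable section

namespace Paper

theorem grp_cyc {Q : Type*} [Group Q] [Finite Q] (x : Q) (m : ℕ) (hm : 1 ≤ m)
    (hx : orderOf x = 2 ^ m) (t : Q) (ht : t ∈ Subgroup.zpowers x) (ht2 : t ^ 2 = 1) :
    t = 1 ∨ t = x ^ (2 ^ (m-1)) := by
  obtain ⟨k, rfl⟩ := Subgroup.mem_zpowers_iff.1 ht
  obtain ⟨m, rfl⟩ := Nat.exists_eq_add_of_le' hm
  rw [← zpow_natCast, ← _root_.zpow_mul, ← orderOf_dvd_iff_zpow_eq_one, hx] at ht2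
  simp only [Nat.add_sub_cancel]
  have h1 : (2:ℤ) ^ m ∣ k := by
    have : (2:ℤ)^m * 2 ∣ k * 2 := by
      have := ht2; push_cast at this; rwa [pow_succ] at this
    exact (mul_dvd_mul_iff_right (by norm_num)).1 this
  obtain ⟨c, rfl⟩ := h1
  have hz : x ^ ((2:ℤ)^m * 2) = 1 := by
    rw [← pow_succ]; exact_mod_cast (hx ▸ pow_orderOf_eq_one x)
  rcases Int.even_or_odd' c with ⟨d, rfl | rfl⟩
  · left
    rw [← mul_assoc, _root_.zpow_mul, hz, _root_.one_zpow]
  · right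
    rw [mul_add, ← mul_assoc, _root_.zpow_add, _root_.zpow_mul, hz, _root_.one_zpow, mul_one, one_mul]
    exact_mod_cast rfl

theorem grp_meet0 {P : Type*} [Group P] [Finite P] (h2 : IsPGroup 2 P) (K : Subgroup P)
    [K.Normal] (hK : K ≠ ⊥) : ∃ k ∈ K, k ≠ 1 ∧ k ^ 2 = 1 ∧ ∀ g, g * k * g⁻¹ = k := by
  have : Fact (Nat.Prime 2) := ⟨Nat.prime_two⟩
  have hC : IsPGroup 2 (ConjAct P) := h2.of_equiv ConjAct.toConjAct
  have hd : 2 ∣ Nat.card K := by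
    rcases (h2.to_subgroup K).card_eq_or_dvd with h | h
    · exact absurd (Subgroup.card_eq_one.1 h) hK
    · exact h
  have h1 : (1 : K) ∈ MulAction.fixedPoints (ConjAct P) K := fun g => smul_one g
  obtain ⟨k, hk, hk1⟩ := hC.exists_fixed_point_of_prime_dvd_card_of_fixed_point K hd h1
  have hcomm : ∀ g : P, g * (k:P) * g⁻¹ = k := by
    intro g
    have := congrArg Subtype.val (hk (ConjAct.toConjAct g))
    simpa [ConjAct.Subgroup.val_conj_smul, ConjAct.toConjAct_smul] using this
  have hkne : (k:P) ≠ 1 := fun h => hk1 (Subtype.ext h.symm)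
  obtain ⟨j, hj⟩ := (IsPGroup.iff_orderOf.1 h2) (k:P)
  have hj0 : j ≠ 0 := by
    rintro rfl
    exact hkne (orderOf_eq_one_iff.1 (by simpa using hj))
  obtain ⟨i, rfl⟩ := Nat.exists_eq_succ_of_ne_zero hj0
  refine ⟨(k:P) ^ 2 ^ i, K.pow_mem k.2 _, ?_, ?_, ?_⟩
  · intro h
    have := orderOf_dvd_of_pow_eq_one h
    rw [hj] at this
    have := (Nat.pow_dvd_pow_iff_le_right (by norm_num)).1 this
    omega
  · rw [← pow_mul, ← pow_succ]; exact hj ▸ pow_orderOf_eq_one (k:P)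
  · intro g
    rw [← conj_pow, hcomm]

theorem grp_meet {Q : Type*} [Group Q] [Finite Q] (h2 : IsPGroup 2 Q) (N D : Subgroup Q)
    [N.Normal] [D.Normal] (hDN : ¬ D ≤ N) :
    ∃ y ∈ D, y ∉ N ∧ y ^ 2 ∈ N ∧ ∀ g, y⁻¹ * (g * y * g⁻¹) ∈ N := by
  have hnorm : (D.map (QuotientGroup.mk' N)).Normal :=
    Subgroup.Normal.map inferInstance _ (QuotientGroup.mk'_surjective N)
  have hne : D.map (QuotientGroup.mk' N) ≠ ⊥ := by
    intro h
    rw [Subgroup.map_eq_bot_iff, QuotientGroup.ker_mk'] at h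
    exact hDN h
  obtain ⟨k, hkD, hk1, hk2, hkc⟩ := grp_meet0 (h2.to_quotient N) _ hne
  obtain ⟨y, hy, rfl⟩ := hkD
  refine ⟨y, hy, ?_, ?_, ?_⟩
  · intro h
    exact hk1 ((QuotientGroup.eq_one_iff y).2 h)
  · rw [← QuotientGroup.eq_one_iff]; exact hk2
  · intro g
    rw [← QuotientGroup.eq]
    exact (hkc (g : Q ⧸ N)).symm

theorem grp_main {Q : Type*} [Group Q] [Finite Q] [Nontrivial Q] (h2 : IsPGroup 2 Q) :
    (∃ x g : Q, ∀ h, h ∈ Subgroup.zpowers x ∨ g⁻¹ * h ∈ Subgroup.zpowers x) ∨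
    ∃ b z : Q, (∀ g, g * z * g⁻¹ = z) ∧ z ^ 2 = 1 ∧ z ≠ 1 ∧ b ^ 2 = 1 ∧ b ≠ 1 ∧ b ≠ z ∧
      ∀ g, g * b * g⁻¹ = b ∨ g * b * g⁻¹ = b * z := by
  have : Fact (Nat.Prime 2) := ⟨Nat.prime_two⟩
  obtain ⟨x, hxN, hmax⟩ := Set.exists_max_image {x : Q | (Subgroup.zpowers x).Normal} orderOf
    (Set.toFinite _) ⟨1, by simp only [Set.mem_ofPred_eq, Subgroup.zpowers_one_eq_bot]; infer_instance⟩
  simp only [Set.mem_ofPred_eq] at hxN hmax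
  obtain ⟨m, hm⟩ := (IsPGroup.iff_orderOf.1 h2) x
  have hm1 : 1 ≤ m := by
    obtain ⟨c, -, hc1, hc2, hcc⟩ := grp_meet0 h2 ⊤ top_ne_bot
    have hcn : (Subgroup.zpowers c).Normal := by
      constructor
      rintro n ⟨k, rfl⟩ g
      refine ⟨k, ?_⟩
      simp only
      rw [← conj_zpow, hcc]
    have := hmax c hcn
    rw [hm, orderOf_eq_prime hc2 hc1] at this
    by_contra h0
    have : m = 0 := by omega
    subst this
    omega
  have hF1 := grp_cyc x m hm1 hm
  have hz2 : (x ^ 2 ^ (m-1)) ^ 2 = 1 := by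
    rw [← pow_mul, ← pow_succ, Nat.sub_add_cancel hm1, ← hm, pow_orderOf_eq_one]
  have hz1 : x ^ 2 ^ (m-1) ≠ 1 := by
    intro h
    have := orderOf_dvd_of_pow_eq_one h
    rw [hm] at this
    have := (Nat.pow_dvd_pow_iff_le_right (by norm_num)).1 this
    omega
  have hzN : x ^ 2 ^ (m-1) ∈ Subgroup.zpowers x := Subgroup.npow_mem_zpowers x _
  obtain ⟨w, hwN, hw1, hw2⟩ : ∃ w ∈ Subgroup.zpowers x, (m = 1 → w = 1) ∧
      (2 ≤ m → w = x ^ 2 ^ (m-2)) := by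
    by_cases h : 2 ≤ m
    · exact ⟨x ^ 2 ^ (m-2), Subgroup.npow_mem_zpowers x _, by omega, fun _ => rfl⟩
    · exact ⟨1, one_mem _, by simp, by omega⟩
  have hwz : 2 ≤ m → w ^ 2 = x ^ 2 ^ (m-1) := by
    intro h
    rw [hw2 h, ← pow_mul, ← pow_succ]
    congr 2; omega
  have hxz : m = 1 → x = x ^ 2 ^ (m-1) := by rintro rfl; simp
  generalize x ^ 2 ^ (m-1) = z at *
  have hNcomm : ∀ s ∈ Subgroup.zpowers x, ∀ t ∈ Subgroup.zpowers x, s * t = t * s := by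
    rintro _ ⟨i, rfl⟩ _ ⟨j, rfl⟩
    exact (Commute.zpow_zpow_self x i j)
  have hzc : ∀ g, g * z * g⁻¹ = z := by
    intro g
    rcases hF1 (g * z * g⁻¹) (hxN.conj_mem z hzN g) (by rw [conj_pow, hz2]; simp) with h | h
    · exact absurd (by simpa using h) hz1
    · exact h
  have hzc' : ∀ g, g * z = z * g := fun g => by
    have := hzc g; rwa [mul_inv_eq_iff_eq_mul] at this
  -- conjugation and w
  have hgw : ∀ g, g * w * g⁻¹ = w ∨ g * w * g⁻¹ = w⁻¹ := by
    intro g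
    have hq : m = 1 ∨ 2 ≤ m := by omega
    rcases hq with hq | hq
    · left; rw [hw1 hq]; simp
    · have hc := hxN.conj_mem w hwN g
      have : (g * w * g⁻¹ * w⁻¹) ^ 2 = 1 := by
        rw [(show Commute (g * w * g⁻¹) w⁻¹ from hNcomm _ hc _ (inv_mem hwN)).mul_pow, conj_pow,
          hwz hq, hzc, inv_pow, hwz hq, mul_inv_cancel]
      rcases hF1 _ (mul_mem hc (inv_mem hwN)) this with h | h
      · left; rwa [mul_inv_eq_one] at h
      · right
        rw [mul_inv_eq_iff_eq_mul] at h
        rw [h, eq_inv_iff_mul_eq_one, mul_assoc, ← pow_two, hwz hq, ← pow_two, hz2]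
  have hDn : (Subgroup.centralizer {w}).Normal := by
    constructor
    intro h hh g
    rw [Subgroup.mem_centralizer_singleton_iff] at hh ⊢
    have e1 : g⁻¹ * w * g = w ∨ g⁻¹ * w * g = w⁻¹ := by simpa using hgw g⁻¹
    have e2 : h * (g⁻¹ * w * g) = (g⁻¹ * w * g) * h := by
      rcases e1 with e | e <;> rw [e]
      · exact hh
      · exact (show Commute h w from hh).inv_right
    calc g * h * g⁻¹ * w = g * (h * (g⁻¹ * w * g)) * g⁻¹ := by group
      _ = w * (g * h * g⁻¹) := by rw [e2]; group
  by_cases hDN : Subgroup.centralizer {w} ≤ Subgroup.zpowers x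
  · left
    by_cases hall : ∃ g, g ∉ Subgroup.centralizer {w}
    · obtain ⟨g, hg⟩ := hall
      refine ⟨x, g, fun h => ?_⟩
      by_cases hh : h ∈ Subgroup.centralizer {w}
      · exact Or.inl (hDN hh)
      · right
        apply hDN
        rw [Subgroup.mem_centralizer_singleton_iff] at hh hg ⊢
        rw [← mul_inv_eq_iff_eq_mul] at hh hg
        have e1 := (hgw g).resolve_left hg
        have e2 := (hgw h).resolve_left hh
        have : g⁻¹ * (h * w * h⁻¹) * g = w := by rw [e2, ← e1]; group
        calc g⁻¹ * h * w = (g⁻¹ * (h * w * h⁻¹) * g) * (g⁻¹ * h) := by group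
          _ = _ := by rw [this]
    · push Not at hall
      exact ⟨x, 1, fun h => Or.inl (hDN (hall h))⟩
  right
  obtain ⟨y, hyD, hyN, hy2, hyc⟩ := grp_meet h2 (Subgroup.zpowers x) _ hDN
  rw [Subgroup.mem_centralizer_singleton_iff] at hyD
  -- action of y on x
  have hyx : y * x * y⁻¹ = x ∨ (2 ≤ m ∧ y * x * y⁻¹ = x * z) := by
    have hq : m = 1 ∨ 2 ≤ m := by omega
    rcases hq with hq | hq
    · left; rw [hxz hq]; exact hzc y
    obtain ⟨u, hu⟩ := hxN.conj_mem x (Subgroup.mem_zpowers x) y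
    simp only at hu
    have hpw : ∀ k : ℤ, x ^ k = 1 ↔ (2:ℤ) ^ m ∣ k := by
      intro k
      rw [← orderOf_dvd_iff_zpow_eq_one, hm]; push_cast; rfl
    obtain ⟨r, rfl⟩ := Nat.exists_eq_add_of_le' hq
    have hw3 := hw2 hq
    simp only [Nat.add_sub_cancel] at hw3
    have h4 : (4:ℤ) ∣ u - 1 := by
      have e1 : y * w * y⁻¹ = w := by rw [hyD]; group
      rw [hw3, ← conj_pow, ← hu, ← zpow_natCast, ← zpow_natCast, ← _root_.zpow_mul,
        ← mul_inv_eq_one, ← _root_.zpow_neg, ← _root_.zpow_add, hpw] at e1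
      push_cast at e1
      have : (2:ℤ)^r * 4 ∣ 2^r * (u - 1) := by
        convert e1 using 1 <;> ring
      exact (mul_dvd_mul_iff_left (by positivity)).1 this
    have h5 : (2:ℤ)^(r+2) ∣ u * u - 1 := by
      rw [← hpw, _root_.zpow_sub, zpow_one, mul_inv_eq_one, _root_.zpow_mul, hu, conj_zpow, hu]
      have e2 := hNcomm _ hy2 x (Subgroup.mem_zpowers x)
      calc y * (y * x * y⁻¹) * y⁻¹ = (y ^ 2 * x) * (y ^ 2)⁻¹ := by rw [pow_two]; group
        _ = x := by rw [e2]; group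
    obtain ⟨c, hc⟩ := h4
    have h6 : (2:ℤ)^(r+2) ∣ (u - 1) * 2 := by
      have e3 : u * u - 1 = ((u - 1) * 2) * (1 + 2 * c) := by
        obtain rfl : u = 1 + 4 * c := by linarith
        ring
      rw [e3] at h5
      refine IsCoprime.dvd_of_dvd_mul_right ?_ h5
      apply IsCoprime.pow_left
      exact ⟨-c, 1, by ring⟩
    rw [← hpw, _root_.zpow_mul] at h6
    have e4 : y * x * y⁻¹ = x * x ^ (u - 1) := by
      rw [← hu, ← _root_.zpow_one_add]; congr 1; ring
    rcases hF1 _ (Subgroup.zpow_mem_zpowers x (u-1)) (by exact_mod_cast h6) with h | h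
    · left; rw [e4, h, mul_one]
    · right; exact ⟨hq, by rw [e4, h]⟩
  have hyt : ∀ i : ℤ, y * x ^ i * y⁻¹ = x ^ i ∨ (2 ≤ m ∧ y * x ^ i * y⁻¹ = x ^ i * z) := by
    intro i
    rcases hyx with h | ⟨hq, h⟩
    · left; rw [← conj_zpow, h]
    · rw [← conj_zpow, h, (show Commute x z from hzc' x).mul_zpow]
      rcases Int.even_or_odd' i with ⟨j, hj | hj⟩
      · left; nth_rewrite 2 [hj]; rw [_root_.zpow_mul]
        rw [show z ^ (2:ℤ) = 1 by exact_mod_cast hz2]; simp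
      · right; refine ⟨hq, ?_⟩; nth_rewrite 2 [hj]; rw [_root_.zpow_add, _root_.zpow_mul]
        rw [show z ^ (2:ℤ) = 1 by exact_mod_cast hz2]; simp
  -- find b
  obtain ⟨t0, ht0, hb2⟩ : ∃ t ∈ Subgroup.zpowers x, (y * t) ^ 2 = 1 := by
    obtain ⟨k, hk⟩ := hy2
    simp only at hk
    have hkev : Even k := by
      by_contra hodd
      rw [Int.not_even_iff_odd] at hodd
      rcases hyx with h | ⟨hq, h⟩
      · -- y generates a larger cyclic normal subgroup
        have hxy : x ∈ Subgroup.zpowers y := by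
          have hcop : IsCoprime k ((2:ℤ)^m) := by
            apply IsCoprime.pow_right
            obtain ⟨j, rfl⟩ := hodd
            exact ⟨1, -j, by ring⟩
          obtain ⟨a, b, hab⟩ := hcop
          have e : x = (y ^ 2) ^ a := by
            have h1 : x ^ ((2:ℤ)^m) = 1 := by exact_mod_cast (hm ▸ pow_orderOf_eq_one x)
            calc x = x ^ (a * k + b * 2 ^ m) := by rw [hab, zpow_one]
              _ = (y ^ 2) ^ a := by
                rw [_root_.zpow_add, mul_comm b, _root_.zpow_mul x _ b, h1, _root_.one_zpow, mul_one, mul_comm, _root_.zpow_mul,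
                  hk]
          rw [e]
          exact zpow_mem (pow_mem (Subgroup.mem_zpowers y) 2) a
        have hle : Subgroup.zpowers x ≤ Subgroup.zpowers y := by
          rwa [Subgroup.zpowers_le]
        have hyn : (Subgroup.zpowers y).Normal := by
          constructor
          rintro _ ⟨i, rfl⟩ g
          simp only
          rw [← conj_zpow]
          apply zpow_mem
          have := mul_mem (Subgroup.mem_zpowers y) (hle (hyc g))
          rwa [mul_inv_cancel_left] at this
        have hcard := hmax y hyn
        rw [← Nat.card_zpowers, ← Nat.card_zpowers] at hcard
        have := Subgroup.eq_of_le_of_card_ge hle hcard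
        exact hyN (this ▸ Subgroup.mem_zpowers y)
      · have e : y * x ^ k * y⁻¹ = x ^ k := by rw [hk]; group
        rw [← conj_zpow, h, (show Commute x z from hzc' x).mul_zpow] at e
        obtain ⟨j, rfl⟩ := hodd
        rw [_root_.zpow_add z, _root_.zpow_mul z, show z ^ (2:ℤ) = 1 by exact_mod_cast hz2] at e
        simp [hz1] at e
    obtain ⟨j, rfl⟩ := hkev
    have hjN : x ^ (-j) ∈ Subgroup.zpowers x := Subgroup.zpow_mem_zpowers x _
    have hgen : ∀ t, (y * t) ^ 2 = (y * t * y⁻¹) * (y ^ 2) * t := by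
      intro t; rw [pow_two, pow_two]; group
    rcases hyt (-j) with h | ⟨hq, h⟩
    · refine ⟨x ^ (-j), hjN, ?_⟩
      rw [hgen, h, ← hk]; group
    · refine ⟨x ^ (-j) * w, mul_mem hjN hwN, ?_⟩
      have e1 : y * (x ^ (-j) * w) * y⁻¹ = x ^ (-j) * z * w := by
        calc y * (x ^ (-j) * w) * y⁻¹ = (y * x ^ (-j) * y⁻¹) * (y * w) * y⁻¹ := by group
          _ = _ := by rw [hyD, h]; group
      rw [hgen, e1, ← hk]
      have e2 : x ^ (-j) * w = w * x ^ (-j) := hNcomm _ hjN _ hwN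
      have e3 : z * w = w * z := (hzc' w).symm
      calc x ^ (-j) * z * w * x ^ (j + j) * (x ^ (-j) * w)
          = x ^ (-j) * (z * (w * x ^ j * w)) := by group
        _ = x ^ (-j) * (z * (x ^ j * (w * w))) := by
            rw [hNcomm w hwN (x ^ j) (Subgroup.zpow_mem_zpowers x _)]; group
        _ = x ^ (-j) * (x ^ j * z * z) := by
            rw [← pow_two w, hwz hq, ← hzc' (x ^ j * z), ← mul_assoc]
        _ = 1 := by rw [mul_assoc, ← pow_two, hz2]; group
  have hbN : y * t0 ∉ Subgroup.zpowers x := fun h => hyN ((mul_mem_cancel_right ht0).1 h)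
  refine ⟨y * t0, z, hzc, hz2, hz1, hb2, fun h => hbN (h ▸ one_mem _), fun h => hbN (h ▸ hzN), ?_⟩
  intro g
  have hbc : (y * t0)⁻¹ * (g * (y * t0) * g⁻¹) ∈ Subgroup.zpowers x := by
    have := mul_mem (mul_mem (inv_mem ht0) (hyc g)) (hxN.conj_mem t0 ht0 g)
    convert this using 1
    group
  obtain ⟨t, ht⟩ : ∃ t, t = (y * t0)⁻¹ * (g * (y * t0) * g⁻¹) := ⟨_, rfl⟩
  rw [← ht] at hbc
  have hgb : g * (y * t0) * g⁻¹ = y * t0 * t := by rw [ht]; group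
  have hsq : (y * t0 * t) ^ 2 = 1 := by rw [← hgb, conj_pow, hb2]; simp
  -- b t b⁻¹ = y t y⁻¹
  have hconj : (y * t0) * t * (y * t0)⁻¹ = y * t * y⁻¹ := by
    calc (y * t0) * t * (y * t0)⁻¹ = y * (t0 * t) * (t0⁻¹ * y⁻¹) := by group
      _ = _ := by rw [hNcomm t0 ht0 t hbc]; group
  have hsq' : y * t * y⁻¹ * t = 1 := by
    rw [← hconj]
    calc y * t0 * t * (y * t0)⁻¹ * t = (y * t0 * t) * (((y * t0) ^ 2)⁻¹ * (y * t0)) * t := by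
          rw [pow_two]; group
      _ = (y * t0 * t) ^ 2 := by rw [hb2, pow_two]; group
      _ = 1 := hsq
  have ht2 : t ^ 2 = 1 := by
    obtain ⟨i, hi⟩ := hbc
    simp only at hi
    rcases hyt i with h | ⟨hq, h⟩
    · rw [hi] at h; rw [h] at hsq'; rwa [pow_two]
    · rw [hi] at h
      rw [h, mul_assoc, ← hzc' t, ← mul_assoc, ← pow_two] at hsq'
      have e1 : t ^ 2 = z := by
        rw [mul_eq_one_iff_eq_inv] at hsq'
        rw [hsq', inv_eq_iff_mul_eq_one, ← pow_two, hz2]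
      have htN : t ∈ Subgroup.zpowers x := hi ▸ Subgroup.zpow_mem_zpowers x i
      have e2 : (t * w⁻¹) ^ 2 = 1 := by
        rw [(show Commute t w⁻¹ from hNcomm _ htN _ (inv_mem hwN)).mul_pow, e1, inv_pow, hwz hq,
          mul_inv_cancel]
      have e3 : y * t = t * y := by
        rcases hF1 _ (mul_mem htN (inv_mem hwN)) e2 with e | e
        · rw [mul_inv_eq_one] at e; rw [e, hyD]
        · rw [mul_inv_eq_iff_eq_mul] at e
          rw [e, ← mul_assoc, hzc', mul_assoc, hyD, mul_assoc]
      rw [e3, mul_inv_cancel_right] at h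
      exact absurd (by simpa using h) hz1
  rcases hF1 t hbc ht2 with h | h
  · left; rw [hgb, h, mul_one]
  · right; rw [hgb, h]

def sform {L : Type*} [Field L] (σ : L →+* L) {n : ℕ} (H : Matrix (Fin n) (Fin n) L)
    (u v : Fin n → L) : L := (fun i => σ (u i)) ⬝ᵥ (H *ᵥ v)

theorem sform_inv {L : Type*} [Field L] (σ : L →+* L) {n : ℕ} (H M : Matrix (Fin n) (Fin n) L)
    (hM : (M.map σ)ᵀ * H * M = H) (u v : Fin n → L) :
    sform σ H (M *ᵥ u) (M *ᵥ v) = sform σ H u v := by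
  unfold sform
  have h1 : (fun i => σ ((M *ᵥ u) i)) = (fun i => σ (u i)) ᵥ* (M.map σ)ᵀ := by
    funext i
    rw [vecMul_transpose]
    simp [mulVec, dotProduct, map_sum]
  rw [h1, ← dotProduct_mulVec, mulVec_mulVec, mulVec_mulVec, hM]

theorem sform_herm {L : Type*} [Field L] (σ : L →+* L) (hσ : ∀ x, σ (σ x) = x)
    {n : ℕ} (H : Matrix (Fin n) (Fin n) L)
    (hH : (H.map σ)ᵀ = H) (u v : Fin n → L) : σ (sform σ H u v) = sform σ H v u := by
  have hij : ∀ i j, σ (H i j) = H j i := fun i j => congrFun (congrFun hH j) i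
  unfold sform
  simp only [dotProduct, mulVec, map_sum, map_mul, hσ, hij, Finset.mul_sum]
  rw [Finset.sum_comm]
  refine Finset.sum_congr rfl fun i _ => Finset.sum_congr rfl fun j _ => ?_
  ring

theorem det_norm {L : Type*} [Field L] [CharZero L] (σ : L →+* L)
    (hσ : ∀ x, σ (σ x) = x) {n : ℕ} (H B g g' : Matrix (Fin n) (Fin n) L) (hH : (H.map σ)ᵀ = H) (hdet : H.det ≠ 0)
    (hB : B * B = 1) (hg : g * g' = 1) (hg' : g' * g = 1) (hgB : g * B = -(B * g))
    (HB : (B.map σ)ᵀ * H * B = H) (Hg : (g.map σ)ᵀ * H * g = H) :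
    ∃ z : L, z ≠ 0 ∧ H.det = z * σ z := by
  let V : Submodule L (Fin n → L) := LinearMap.ker (B.mulVecLin - LinearMap.id)
  have hV : ∀ v, v ∈ V ↔ B *ᵥ v = v := by
    intro v; simp [V, LinearMap.mem_ker, sub_eq_zero]
  have hBg : ∀ v, B *ᵥ (g *ᵥ v) = - (g *ᵥ (B *ᵥ v)) := by
    intro v
    rw [mulVec_mulVec, mulVec_mulVec, hgB, neg_mulVec, neg_neg]
  have hg'B : g' * B = -(B * g') := by
    have : g' * (g * B) * g' = g' * (-(B * g)) * g' := by rw [hgB]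
    rw [← mul_assoc, hg', one_mul, mul_neg, neg_mul, mul_assoc g', mul_assoc B, hg, mul_one] at this
    rw [this, neg_neg]
  have hBg' : ∀ v, B *ᵥ (g' *ᵥ v) = - (g' *ᵥ (B *ᵥ v)) := by
    intro v
    rw [mulVec_mulVec, mulVec_mulVec, hg'B, neg_mulVec, neg_neg]
  have hBB : ∀ v, B *ᵥ (B *ᵥ v) = v := by intro v; rw [mulVec_mulVec, hB, one_mulVec]
  let f : (V × V) →ₗ[L] (Fin n → L) := V.subtype.coprod (g.mulVecLin ∘ₗ V.subtype)
  have hf : ∀ p : V × V, f p = (p.1 : Fin n → L) + g *ᵥ (p.2 : Fin n → L) := by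
    intro p; simp [f]
  have hfb : Function.Bijective f := by
    constructor
    · rw [← LinearMap.ker_eq_bot, LinearMap.ker_eq_bot']
      rintro ⟨⟨a, ha⟩, ⟨b, hb⟩⟩ h
      rw [hf] at h
      simp only at h
      rw [hV] at ha hb
      have h' := congrArg (fun v => B *ᵥ v) h
      simp only [mulVec_add, hBg, ha, hb, mulVec_zero] at h'
      have ha0 : a = 0 := by
        have : (2:L) • a = 0 := by
          rw [two_smul]; linear_combination h + h'
        exact (smul_eq_zero.1 this).resolve_left two_ne_zero
      subst ha0
      have hb0 : b = 0 := by
        rw [zero_add] at h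
        have := congrArg (fun v => g' *ᵥ v) h
        simpa [mulVec_mulVec, hg'] using this
      subst hb0
      rfl
    · intro v
      refine ⟨(⟨(2:L)⁻¹ • (v + B *ᵥ v), ?_⟩, ⟨g' *ᵥ ((2:L)⁻¹ • (v - B *ᵥ v)), ?_⟩), ?_⟩
      · rw [hV, mulVec_smul, mulVec_add, hBB, add_comm]
      · rw [hV, hBg', mulVec_smul, mulVec_sub, hBB, ← mulVec_neg, ← smul_neg, neg_sub]
      · rw [hf]
        simp only
        rw [mulVec_mulVec, hg, one_mulVec, ← smul_add]
        rw [show v + B *ᵥ v + (v - B *ᵥ v) = (2:L) • v by rw [two_smul]; abel]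
        rw [smul_smul, inv_mul_cancel₀ two_ne_zero, one_smul]
  let F : (V × V) ≃ₗ[L] (Fin n → L) := LinearEquiv.ofBijective f hfb
  let b := Module.finBasis L V
  let m := Module.finrank L V
  let bb : Module.Basis (Fin m ⊕ Fin m) L (Fin n → L) := (b.prod b).map F
  have hbl : ∀ i, bb (Sum.inl i) = (b i : Fin n → L) := by
    intro i; simp [bb, F, hf]
  have hbr : ∀ i, bb (Sum.inr i) = g *ᵥ (b i : Fin n → L) := by
    intro i; simp [bb, F, hf]
  let φ : Fin m ⊕ Fin m ≃ Fin n := bb.indexEquiv (Pi.basisFun L (Fin n))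
  let P : Matrix (Fin n) (Fin n) L := Matrix.of fun k j => bb (φ.symm j) k
  have hPdet : P.det ≠ 0 := by
    have : LinearIndependent L P.col := by
      have h := (bb.reindex φ).linearIndependent
      convert h using 1
      funext j
      rw [Module.Basis.reindex_apply]
      rfl
    rw [Matrix.linearIndependent_cols_iff_isUnit, Matrix.isUnit_iff_isUnit_det] at this
    exact this.ne_zero
  let H1 : Matrix (Fin m) (Fin m) L := Matrix.of fun i j => sform σ H (b i) (b j)
  have hPij : (P.map σ)ᵀ * H * P = (fromBlocks H1 0 0 H1).submatrix φ.symm φ.symm := by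
    have e : ∀ i j, ((P.map σ)ᵀ * H * P) i j = sform σ H (bb (φ.symm i)) (bb (φ.symm j)) := by
      intro i j
      rw [mul_assoc]
      rfl
    have hs : ∀ u ∈ V, ∀ v ∈ V, sform σ H u (g *ᵥ v) = 0 ∧ sform σ H (g *ᵥ u) v = 0 := by
      intro u hu v hv
      rw [hV] at hu hv
      have e1 := sform_inv σ H B HB u (g *ᵥ v)
      have e2 := sform_inv σ H B HB (g *ᵥ u) v
      rw [hBg, hu, hv] at e1 e2
      have n1 : ∀ x y, sform σ H x (-y) = - sform σ H x y := by
        intro x y; simp [sform, mulVec_neg]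
      have n2 : ∀ x y, sform σ H (-x) y = - sform σ H x y := by
        intro x y; simp [sform, dotProduct]
      rw [n1] at e1
      rw [n2] at e2
      exact ⟨self_eq_neg.1 e1.symm, self_eq_neg.1 e2.symm⟩
    ext i j
    rw [e, submatrix_apply]
    rcases φ.symm i with i | i <;> rcases φ.symm j with j | j
    · rw [hbl, hbl]; rfl
    · rw [hbl, hbr, (hs _ (b i).2 _ (b j).2).1]; rfl
    · rw [hbl, hbr, (hs _ (b i).2 _ (b j).2).2]; rfl
    · rw [hbr, hbr, sform_inv σ H g Hg]; rfl
  have hd := congrArg Matrix.det hPij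
  rw [det_mul, det_mul, det_transpose, det_submatrix_equiv_self, det_fromBlocks_zero₂₁] at hd
  have hσdet : ∀ {k : ℕ} (M : Matrix (Fin k) (Fin k) L), (M.map σ).det = σ M.det := by
    intro k M; exact (RingHom.map_det σ M).symm
  rw [hσdet] at hd
  have hH1 : σ H1.det = H1.det := by
    rw [← hσdet, ← det_transpose]
    congr 1
    ext i j
    exact sform_herm σ hσ H hH _ _
  have hσP : σ P.det ≠ 0 := (map_ne_zero σ).2 hPdet
  have hH1ne : H1.det ≠ 0 := by
    intro h0
    rw [h0, mul_zero] at hd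
    exact mul_ne_zero (mul_ne_zero hσP hdet) hPdet hd
  refine ⟨H1.det / P.det, div_ne_zero hH1ne hPdet, ?_⟩
  rw [map_div₀, hH1]
  field_simp
  linear_combination hd

theorem idem_trace {n : ℕ} (P : Matrix (Fin n) (Fin n) ℂ) (hP : P * P = P)
    (ht : P.trace = n) : P = 1 := by
  have h1 : IsIdempotentElem (Matrix.toLin' (1 - P)) := by
    unfold IsIdempotentElem
    rw [Module.End.mul_eq_comp, ← Matrix.toLin'_mul]
    congr 1
    rw [sub_mul, mul_sub, mul_sub, hP]; simp
  have h2 := LinearMap.IsIdempotentElem.eq_zero_of_trace_eq_zero h1 (by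
    rw [Matrix.trace_toLin'_eq, trace_sub, ht]; simp)
  have h3 : 1 - P = 0 := Matrix.toLin'.map_eq_zero_iff.1 h2
  exact (sub_eq_zero.1 h3).symm

theorem fin_trace {n : ℕ} (M : Matrix (Fin n) (Fin n) ℂ) (k : ℕ) (hk : k ≠ 0) (hM : M ^ k = 1)
    (ht : ∀ i : ℕ, (M ^ i).trace = n) : M = 1 := by
  let S : Matrix (Fin n) (Fin n) ℂ := ∑ i ∈ Finset.range k, M ^ i
  have hkC : (k : ℂ) ≠ 0 := by exact_mod_cast hk
  have hMS : M * S = S := by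
    have h := mul_geom_sum M k
    rw [hM, sub_self, sub_mul, one_mul, sub_eq_zero] at h
    exact h
  have hpow : ∀ i : ℕ, M ^ i * S = S := by
    intro i
    induction i with
    | zero => simp
    | succ i ih => rw [pow_succ, mul_assoc, hMS, ih]
  have hSS : S * S = (k : ℂ) • S := by
    nth_rewrite 1 [show S = ∑ i ∈ Finset.range k, M ^ i from rfl]
    rw [Finset.sum_mul, Finset.sum_congr rfl (fun i _ => hpow i)]
    simp [Nat.cast_smul_eq_nsmul]
  have h1 : (k : ℂ)⁻¹ • S = 1 := by
    apply idem_trace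
    · rw [smul_mul_smul_comm, hSS, smul_smul, mul_assoc, inv_mul_cancel₀ hkC, mul_one]
    · rw [trace_smul, trace_sum, Finset.sum_congr rfl (fun i _ => ht i)]
      simp [hkC]
  calc M = M * ((k : ℂ)⁻¹ • S) := by rw [h1, mul_one]
    _ = 1 := by rw [mul_smul_comm, hMS, h1]

theorem ker_transfer {G : Type} [Group G] [Finite G] {n : ℕ} (ρ ρ' : G →* GL (Fin n) ℂ)
    (h : charOf ρ = charOf ρ') (x : G) (hx : ρ x = 1) :
    (ρ' x : Matrix (Fin n) (Fin n) ℂ) = 1 := by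
  have ht : ∀ i : ℕ, ((ρ' x : Matrix (Fin n) (Fin n) ℂ) ^ i).trace = n := by
    intro i
    have := congrFun h (x ^ i)
    simp only [charOf, map_pow, hx, one_pow] at this
    simpa using this.symm
  refine fin_trace _ (Nat.card G) Nat.card_pos.ne' ?_ ht
  rw [← Units.val_pow_eq_pow_val, ← map_pow, pow_card_eq_one', map_one, Units.val_one]

theorem neg_transfer {G : Type} [Group G] [Finite G] {n : ℕ} (ρ ρ' : G →* GL (Fin n) ℂ)
    (h : charOf ρ = charOf ρ') (x : G) (hx : (ρ x : Matrix (Fin n) (Fin n) ℂ) = -1) :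
    (ρ' x : Matrix (Fin n) (Fin n) ℂ) = -1 := by
  have h2 : (ρ' x : Matrix (Fin n) (Fin n) ℂ) * (ρ' x : Matrix (Fin n) (Fin n) ℂ) = 1 := by
    have := ker_transfer ρ ρ' h (x * x) (by
      apply Units.ext
      rw [map_mul, Units.val_mul, hx]; simp)
    rwa [map_mul, Units.val_mul] at this
  have ht : (ρ' x : Matrix (Fin n) (Fin n) ℂ).trace = -n := by
    have := congrFun h x
    simp only [charOf, hx] at this
    simpa using this.symm
  have h1 : (2:ℂ)⁻¹ • (1 - (ρ' x : Matrix (Fin n) (Fin n) ℂ)) = 1 := by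
    apply idem_trace
    · rw [smul_mul_smul_comm, sub_mul, mul_sub, mul_sub, h2, one_mul, mul_one]
      ext i j
      simp; ring
    · rw [trace_smul, trace_sub, ht]; simp; ring
  have h3 : (1 - (ρ' x : Matrix (Fin n) (Fin n) ℂ)) = (2:ℂ) • 1 := by
    have := congrArg (fun M => (2:ℂ) • M) h1
    simpa only [smul_smul, mul_inv_cancel₀ (two_ne_zero' ℂ), one_smul] using this
  have h4 : (ρ' x : Matrix (Fin n) (Fin n) ℂ) = 1 - (2:ℂ) • 1 := by rw [← h3]; abel
  rw [h4, two_smul]; abel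

/-- Cyclic subgroup of index at most two forces degree at most two. -/
theorem small_deg {G : Type} [Group G] [Finite G] {n : ℕ} (ρ : G →* GL (Fin n) ℂ)
    (hirr : IsIrredRep ρ) (x g : ρ.range)
    (hx : ∀ h : ρ.range, h ∈ Subgroup.zpowers x ∨ g⁻¹ * h ∈ Subgroup.zpowers x) : n ≤ 2 := by
  obtain ⟨hn, hirr⟩ := hirr
  have : Nonempty (Fin n) := ⟨⟨0, hn⟩⟩
  have : Finite ρ.range := Finite.of_surjective _ ρ.rangeRestrict_surjective
  let act : ρ.range → Matrix (Fin n) (Fin n) ℂ := fun h => ((h : GL (Fin n) ℂ) : Matrix _ _ ℂ)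
  have act_mul : ∀ a b, act (a * b) = act a * act b := fun a b => rfl
  obtain ⟨c, hc⟩ := Module.End.exists_eigenvalue (act x).mulVecLin
  obtain ⟨v, hv⟩ := hc.exists_hasEigenvector
  have hv1 : act x *ᵥ v = c • v := hv.apply_eq_smul
  have hpow : ∀ k : ℕ, ∃ d : ℂ, act (x ^ k) *ᵥ v = d • v := by
    intro k
    induction k with
    | zero => exact ⟨1, by rw [pow_zero, one_smul]; exact one_mulVec v⟩
    | succ k ih =>
      obtain ⟨d, hd⟩ := ih
      refine ⟨c * d, ?_⟩
      rw [pow_succ, act_mul, ← mulVec_mulVec, hv1, mulVec_smul, hd, smul_smul]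
  have hz : ∀ t ∈ Subgroup.zpowers x, ∃ d : ℂ, act t *ᵥ v = d • v := by
    intro t ht
    rw [← mem_powers_iff_mem_zpowers] at ht
    obtain ⟨k, rfl⟩ := ht
    exact hpow k
  let W : Submodule ℂ (Fin n → ℂ) := Submodule.span ℂ {v, act g *ᵥ v}
  have hvW : v ∈ W := Submodule.subset_span (by simp)
  have hgW : act g *ᵥ v ∈ W := Submodule.subset_span (by simp)
  have hall : ∀ h, act h *ᵥ v ∈ W := by
    intro h
    rcases hx h with h1 | h1
    · obtain ⟨d, hd⟩ := hz _ h1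
      rw [hd]; exact W.smul_mem _ hvW
    · obtain ⟨d, hd⟩ := hz _ h1
      have : act h = act g * act (g⁻¹ * h) := by rw [← act_mul, mul_inv_cancel_left]
      rw [this, ← mulVec_mulVec, hd, mulVec_smul]
      exact W.smul_mem _ hgW
  have hinv : ∀ (y : G), ∀ u ∈ W, (ρ y : Matrix (Fin n) (Fin n) ℂ).mulVec u ∈ W := by
    intro y u hu
    have hle : W ≤ W.comap (ρ y : Matrix (Fin n) (Fin n) ℂ).mulVecLin := by
      rw [Submodule.span_le]
      rintro w (rfl | rfl)
      · exact hall ⟨ρ y, y, rfl⟩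
      · have := hall (⟨ρ y, y, rfl⟩ * g)
        rw [act_mul, ← mulVec_mulVec] at this
        exact this
    exact hle hu
  rcases hirr W hinv with h | h
  · rw [h, Submodule.mem_bot] at hvW
    exact absurd hvW hv.2
  · have h1 : Module.finrank ℂ W = n := by rw [h, finrank_top]; simp
    have h2 : Module.finrank ℂ W ≤ 2 := by
      have := finrank_span_finset_le_card (R := ℂ) ({v, act g *ᵥ v} : Finset (Fin n → ℂ))
      simp only [Finset.coe_insert, Finset.coe_singleton] at this
      exact this.trans Finset.card_le_two
    omega

theorem central_inv {G : Type} [Group G] {n : ℕ} (ρ : G →* GL (Fin n) ℂ)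
    (hirr : IsIrredRep ρ) (z : ρ.range) (hc : ∀ g, g * z * g⁻¹ = z) (hz : z ^ 2 = 1) :
    z = 1 ∨ ((z : GL (Fin n) ℂ) : Matrix (Fin n) (Fin n) ℂ) = -1 := by
  obtain ⟨hn, hirr⟩ := hirr
  obtain ⟨Z, hZ⟩ : ∃ Z, Z = ((z : GL (Fin n) ℂ) : Matrix (Fin n) (Fin n) ℂ) := ⟨_, rfl⟩
  have hZZ : Z * Z = 1 := by
    have := congrArg (fun t : ρ.range => ((t : GL (Fin n) ℂ) : Matrix (Fin n) (Fin n) ℂ)) hz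
    rw [hZ]; rw [pow_two] at this; exact this
  let W : Submodule ℂ (Fin n → ℂ) := LinearMap.ker (Z.mulVecLin - LinearMap.id)
  have hW : ∀ v, v ∈ W ↔ Z *ᵥ v = v := by
    intro v; simp [W, LinearMap.mem_ker, sub_eq_zero]
  have hinv : ∀ (y : G), ∀ u ∈ W, (ρ y : Matrix (Fin n) (Fin n) ℂ).mulVec u ∈ W := by
    intro y u hu
    rw [hW] at hu ⊢
    have h1 : (⟨ρ y, y, rfl⟩ : ρ.range) * z = z * ⟨ρ y, y, rfl⟩ := by
      have := hc ⟨ρ y, y, rfl⟩; rwa [mul_inv_eq_iff_eq_mul] at this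
    have h2 : (ρ y : Matrix (Fin n) (Fin n) ℂ) * Z = Z * (ρ y : Matrix (Fin n) (Fin n) ℂ) := by
      have := congrArg (fun t : ρ.range => ((t : GL (Fin n) ℂ) : Matrix (Fin n) (Fin n) ℂ)) h1
      rw [hZ]; exact this
    rw [mulVec_mulVec, ← h2, ← mulVec_mulVec, hu]
  rcases hirr W hinv with h | h
  · right
    rw [← hZ]
    apply Matrix.mulVec_injective
    funext v
    have hm : v + Z *ᵥ v ∈ W := by
      rw [hW, mulVec_add, mulVec_mulVec, hZZ, one_mulVec, add_comm]
    rw [h, Submodule.mem_bot] at hm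
    simp only [neg_mulVec, one_mulVec]
    exact (neg_eq_of_add_eq_zero_right hm).symm
  · left
    have : Z = 1 := by
      apply Matrix.mulVec_injective
      funext v
      have : v ∈ W := by rw [h]; trivial
      rw [hW] at this
      simpa using this
    apply Subtype.ext
    apply Units.ext
    rw [← hZ, this]; rfl

theorem rep_main {G : Type} [Group G] [Finite G] (h2 : IsPGroup 2 G) {n : ℕ}
    (ρ : G →* GL (Fin n) ℂ) (hirr : IsIrredRep ρ) (hn : 2 < n) :
    ∃ b g : G, ρ (b * b) = 1 ∧ (ρ (g * b * g⁻¹ * b) : Matrix (Fin n) (Fin n) ℂ) = -1 := by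
  have : Finite ρ.range := Finite.of_surjective _ ρ.rangeRestrict_surjective
  have hQ : IsPGroup 2 ρ.range := h2.of_surjective ρ.rangeRestrict ρ.rangeRestrict_surjective
  rcases subsingleton_or_nontrivial ρ.range with hs | hs
  · have := small_deg ρ hirr 1 1 (fun h => Or.inl (by rw [Subsingleton.elim h 1]; exact one_mem _))
    omega
  rcases grp_main hQ with ⟨x, g, hx⟩ | ⟨b, z, hzc, hz2, hz1, hb2, hb1, hbz, hb⟩
  · have := small_deg ρ hirr x g hx
    omega
  have hzneg := (central_inv ρ hirr z hzc hz2).resolve_left hz1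
  have hex : ∃ g, g * b * g⁻¹ ≠ b := by
    by_contra hno
    push Not at hno
    have h3 := (central_inv ρ hirr b hno hb2).resolve_left hb1
    exact hbz (Subtype.ext (Units.ext (h3.trans hzneg.symm)))
  obtain ⟨g, hg⟩ := hex
  have hgb := (hb g).resolve_left hg
  have hfin : g * b * g⁻¹ * b = z := by
    have hbz : b * z * b⁻¹ = z := hzc b
    rw [mul_inv_eq_iff_eq_mul] at hbz
    rw [hgb, hbz, mul_assoc, ← pow_two, hb2, mul_one]
  obtain ⟨b0, hb0⟩ := b.2
  obtain ⟨g0, hg0⟩ := g.2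
  refine ⟨b0, g0, ?_, ?_⟩
  · rw [map_mul, hb0]
    rw [pow_two] at hb2
    exact congrArg Subtype.val hb2
  · rw [← hzneg, ← hfin]
    simp only [map_mul, map_inv, hb0, hg0]
    rfl


theorem final_sub {G : Type} [Group G] {n : ℕ} (L : Subfield ℂ) (s : ℂ →+* ℂ)
    (hs : ∀ z ∈ L, s z ∈ L) (hss : ∀ z, s (s z) = z) (ρ : G →* GL (Fin n) ℂ)
    (hρ : ∀ g i j, (ρ g : Matrix (Fin n) (Fin n) ℂ) i j ∈ L)
    (H : Matrix (Fin n) (Fin n) ℂ) (hHL : ∀ i j, H i j ∈ L) (hdet : IsUnit H.det)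
    (hH : (H.map s)ᵀ = H)
    (hinv : ∀ g, ((ρ g : Matrix (Fin n) (Fin n) ℂ).map s)ᵀ * H *
      (ρ g : Matrix (Fin n) (Fin n) ℂ) = H)
    (b g : G) (hb : (ρ (b * b) : Matrix (Fin n) (Fin n) ℂ) = 1)
    (hgb : (ρ (g * b * g⁻¹ * b) : Matrix (Fin n) (Fin n) ℂ) = -1) :
    ∃ z ∈ L, z ≠ 0 ∧ H.det = z * s z := by
  let σ : L →+* L := (s.comp L.subtype).codRestrict L (fun x => hs x x.2)
  let R : G → Matrix (Fin n) (Fin n) L := fun g => Matrix.of fun i j => ⟨_, hρ g i j⟩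
  let H' : Matrix (Fin n) (Fin n) L := Matrix.of fun i j => ⟨_, hHL i j⟩
  have hR : ∀ g, (R g).map L.subtype = (ρ g : Matrix (Fin n) (Fin n) ℂ) := fun g => rfl
  have hH' : H'.map L.subtype = H := rfl
  have hinj : Function.Injective
      (fun M : Matrix (Fin n) (Fin n) L => M.map L.subtype) :=
    Matrix.map_injective Subtype.val_injective
  have hmul : ∀ a c, R (a * c) = R a * R c := by
    intro a c
    apply hinj
    simp only [Matrix.map_mul, hR, map_mul, Units.val_mul]
  have hone : R 1 = 1 := by
    apply hinj
    simp only [hR, map_one, Units.val_one]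
    ext i j
    simp [Matrix.one_apply, apply_ite]
  have hinv' : ∀ g, ((R g).map σ)ᵀ * H' * R g = H' := by
    intro g
    apply hinj
    simp only [Matrix.map_mul, hR, hH']
    exact hinv g
  have hdet' : L.subtype H'.det = H.det := by
    rw [RingHom.map_det]; rfl
  have hgg : R g * R g⁻¹ = 1 := by rw [← hmul, mul_inv_cancel, hone]
  have hgg' : R g⁻¹ * R g = 1 := by rw [← hmul, inv_mul_cancel, hone]
  have hbb : R b * R b = 1 := by
    rw [← hmul]
    apply hinj
    simp only [hR, hb]
    ext i j
    simp [Matrix.one_apply, apply_ite]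
  have hgb' : R g * R b * R g⁻¹ * R b = -1 := by
    rw [← hmul, ← hmul, ← hmul]
    apply hinj
    simp only [hR, hgb]
    ext i j
    simp [Matrix.one_apply, apply_ite]
  have hanti : R g * R b = -(R b * R g) := by
    have h1 : R g * R b * R g⁻¹ * R b * (R b * R g) = -(R b * R g) := by rw [hgb', neg_one_mul]
    rw [← h1]
    calc R g * R b = R g * R b * (R g⁻¹ * R g) := by rw [hgg', mul_one]
      _ = R g * R b * R g⁻¹ * (R b * R b) * R g := by rw [hbb, mul_one, mul_assoc (R g * R b)]
      _ = _ := by simp only [mul_assoc]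
  obtain ⟨z, hz, he⟩ := det_norm σ (fun x => Subtype.ext (hss x)) H' (R b) (R g) (R g⁻¹)
    (by apply hinj; exact hH)
    (fun h0 => hdet.ne_zero (by rw [← hdet', h0, map_zero])) hbb hgg hgg' hanti (hinv' b) (hinv' g)
  refine ⟨z, z.2, fun h0 => hz (Subtype.ext h0), ?_⟩
  rw [← hdet', he]
  rfl

/-- an irreducible rational character of a `2`-group of degree
divisible by `4` has trivial unitary discriminant over any totally complex number
field and trivial orthogonal discriminant over any totally real number field. -/
theorem stmt18 (G : Type) [Group G] [Finite G] (h2 : IsPGroup 2 G)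
    (χ : G → ℂ) (hχ : IsIrrChar χ) (hrat : IsRationalChar χ)
    (n : ℕ) (hn : χ 1 = (n : ℂ)) (h4 : 4 ∣ n) :
    (∀ L : Subfield ℂ,
      (∀ z ∈ L, (starRingEnd ℂ) z ∈ L) →
      ¬ (L : Set ℂ) ⊆ Set.range ((↑) : ℝ → ℂ) →
      FiniteDimensional ℚ ↥L →
      IsEmpty (↥L →+* ℝ) →
      ∀ ρ : G →* GL (Fin n) ℂ, χ = charOf ρ →
        (∀ g i j, ((ρ g : Matrix (Fin n) (Fin n) ℂ)) i j ∈ L) →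
        ∀ H : Matrix (Fin n) (Fin n) ℂ,
          (∀ i j, H i j ∈ L) → IsUnit H.det → H.conjTranspose = H →
          (∀ g, ((ρ g : Matrix (Fin n) (Fin n) ℂ)).conjTranspose * H *
            (ρ g : Matrix (Fin n) (Fin n) ℂ) = H) →
          ∃ z ∈ L, z ≠ 0 ∧
            (-1 : ℂ) ^ (n * (n - 1) / 2) * H.det = z * (starRingEnd ℂ) z) ∧
    (∀ K : Subfield ℂ,
      (K : Set ℂ) ⊆ Set.range ((↑) : ℝ → ℂ) →
      FiniteDimensional ℚ ↥K →
      (∀ τ : ↥K →+* ℂ, ∀ x : ↥K, (τ x).im = 0) →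
      ∀ ρ : G →* GL (Fin n) ℂ, χ = charOf ρ →
        (∀ g i j, ((ρ g : Matrix (Fin n) (Fin n) ℂ)) i j ∈ K) →
        ∀ H : Matrix (Fin n) (Fin n) ℂ,
          (∀ i j, H i j ∈ K) → IsUnit H.det → H.transpose = H →
          (∀ g, ((ρ g : Matrix (Fin n) (Fin n) ℂ)).transpose * H *
            (ρ g : Matrix (Fin n) (Fin n) ℂ) = H) →
          ∃ z ∈ K, z ≠ 0 ∧
            (-1 : ℂ) ^ (n * (n - 1) / 2) * H.det = z ^ 2) := by
  obtain ⟨n0, ρ0, hirr, rfl⟩ := hχ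
  have hn0 : n0 = n := by
    have h1 : charOf ρ0 1 = (n0 : ℂ) := by simp [charOf]
    exact_mod_cast h1.symm.trans hn
  subst hn0
  have hn2 : 2 < n0 := by
    have := hirr.1
    have := Nat.le_of_dvd this h4
    omega
  have hsign : (-1 : ℂ) ^ (n0 * (n0 - 1) / 2) = 1 := by
    apply Even.neg_one_pow
    obtain ⟨k, rfl⟩ := h4
    rw [show 4 * k * (4 * k - 1) = 2 * (2 * (k * (4 * k - 1))) by ring,
      Nat.mul_div_cancel_left _ (by norm_num)]
    exact even_two_mul _
  obtain ⟨b, g, hb, hg⟩ := rep_main h2 ρ0 hirr hn2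
  rw [hsign]
  simp only [one_mul]
  constructor
  · intro L hL _ _ _ ρ hρ hρL H hHL hdet hH hinv
    exact final_sub L (starRingEnd ℂ) hL Complex.conj_conj ρ hρL H hHL hdet hH hinv b g
      (ker_transfer ρ0 ρ hρ _ hb) (neg_transfer ρ0 ρ hρ _ hg)
  · intro K _ _ _ ρ hρ hρK H hHK hdet hH hinv
    obtain ⟨z, hzK, hz, he⟩ := final_sub K (RingHom.id ℂ) (fun z hz => hz) (fun _ => rfl) ρ hρK H
      hHK hdet hH hinv b g (ker_transfer ρ0 ρ hρ _ hb) (neg_transfer ρ0 ρ hρ _ hg)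
    exact ⟨z, hzK, hz, by rw [he, pow_two]; rfl⟩

end Paper
end
end

section
/- Let G be a finite group, U ≤ G a subgroup, and ψ an irreducible complex character of U such that χ := Ind_U^G ψ is an irreducible character of G. Then ℚ(χ) ⊆ ℚ(ψ). Moreover, let Ψ be the set of irreducible constituents of the restriction of χ to U that have degree ψ(1); if the cardinality of Ψ is odd, then there exists ψ' ∈ Ψ with ℚ(χ) ⊆ ℚ(ψ') and [ℚ(ψ') : ℚ(χ)] odd. -/
open Matrix

noncomputable section

namespace Paper

open scoped Classical in
/-- The character of `G` induced from a character `ψ` of the subgroup `U`. -/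
def inducedChar {G : Type} [Group G] (U : Subgroup G) (ψ : ↥U → ℂ) : G → ℂ :=
  fun g => (Nat.card ↥U : ℂ)⁻¹ *
    ∑ᶠ x : G, if h : x⁻¹ * g * x ∈ U then ψ (⟨x⁻¹ * g * x, h⟩ : ↥U) else 0

/-- The scalar product of two class functions on a finite group. -/
def cInner {U : Type} [Group U] (α β : U → ℂ) : ℂ :=
  (Nat.card U : ℂ)⁻¹ * ∑ᶠ u : U, α u * (starRingEnd ℂ) (β u)

theorem exists_algEquiv_of_countable {F E₁ E₂ : Type} [Field F] [Field E₁] [Field E₂]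
    [Algebra F E₁] [Algebra F E₂] [IsAlgClosed E₁] [IsAlgClosed E₂]
    (hF : Cardinal.mk F ≤ Cardinal.aleph0) (h1 : Cardinal.aleph0 < Cardinal.mk E₁) (h12 : Cardinal.mk E₁ = Cardinal.mk E₂) : Nonempty (E₁ ≃ₐ[F] E₂) := by
  obtain ⟨s, hs⟩ := exists_isTranscendenceBasis F E₁
  obtain ⟨t, ht⟩ := exists_isTranscendenceBasis F E₂
  have e1 := IsAlgClosed.cardinal_eq_cardinal_transcendence_basis_of_aleph0_lt' _ hs hF h1
  have e2 := IsAlgClosed.cardinal_eq_cardinal_transcendence_basis_of_aleph0_lt' _ ht hF (h12 ▸ h1)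
  have : Cardinal.mk s = Cardinal.mk t := by rw [← e1, h12, e2]
  obtain ⟨e⟩ := Cardinal.eq.1 this
  let := IsAlgClosed.isAlgClosure_of_transcendence_basis _ hs
  let := IsAlgClosed.isAlgClosure_of_transcendence_basis _ ht
  let f : Algebra.adjoin F (Set.range ((↑) : s → E₁)) ≃ₐ[F]
      Algebra.adjoin F (Set.range ((↑) : t → E₂)) :=
    hs.1.aevalEquiv.symm.trans ((MvPolynomial.renameEquiv F e).trans ht.1.aevalEquiv)
  refine ⟨AlgEquiv.ofRingEquiv (f := IsAlgClosure.equivOfEquiv E₁ E₂ f.toRingEquiv) fun r => ?_⟩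
  have := IsAlgClosure.equivOfEquiv_algebraMap E₁ E₂ f.toRingEquiv (algebraMap F _ r)
  rw [← IsScalarTower.algebraMap_apply] at this
  rw [this, IsScalarTower.algebraMap_apply F (Algebra.adjoin F (Set.range ((↑) : t → E₂))) E₂]
  congr 1
  exact f.commutes r

/-- Every field embedding of a countable subfield of `ℂ` extends to an automorphism. -/
theorem exists_ringEquiv_extending (L : Subfield ℂ) (hL : Cardinal.mk L ≤ Cardinal.aleph0) (τ : L →+* ℂ) :
    ∃ σ : ℂ ≃+* ℂ, ∀ x : L, σ x = τ x := by
  have hC : Cardinal.aleph0 < Cardinal.mk ℂ := by rw [Cardinal.mk_complex]; exact Cardinal.aleph0_lt_continuum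
  obtain ⟨e⟩ := @exists_algEquiv_of_countable L ℂ ℂ _ _ _ _ τ.toAlgebra _ _ hL hC rfl
  refine ⟨(@AlgEquiv.toRingEquiv _ _ _ _ _ _ _ τ.toAlgebra e), fun x => ?_⟩
  exact @AlgEquiv.commutes _ _ _ _ _ _ _ τ.toAlgebra e x

open scoped ComplexOrder in
theorem charOf_inv {G : Type} [Group G] [Finite G] {n : ℕ} (ρ : G →* GL (Fin n) ℂ) (g : G) :
    charOf ρ g⁻¹ = (starRingEnd ℂ) (charOf ρ g) := by
  classical
  have := Fintype.ofFinite G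
  let A : G → Matrix (Fin n) (Fin n) ℂ := fun g => (ρ g : Matrix (Fin n) (Fin n) ℂ)
  have hmul : ∀ a b, A (a * b) = A a * A b := fun a b => by simp [A]
  have h1 : A 1 = 1 := by simp [A]
  let H : Matrix (Fin n) (Fin n) ℂ := ∑ g, (A g)ᴴ * A g
  have hH : H.PosDef := by
    have : H = (A 1)ᴴ * A 1 + ∑ g ∈ Finset.univ.erase 1, (A g)ᴴ * A g := by
      exact (Finset.add_sum_erase _ (fun g => (A g)ᴴ * A g) (Finset.mem_univ (1 : G))).symm
    rw [this, h1]
    refine Matrix.PosDef.add_posSemidef ?_ ?_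
    · simpa using Matrix.PosDef.one
    · refine Matrix.posSemidef_sum _ fun i _ => Matrix.posSemidef_conjTranspose_mul_self _
  have hinv : ∀ g, (A g)ᴴ * H * A g = H := by
    intro g
    simp only [H, Finset.mul_sum, Finset.sum_mul]
    rw [← Equiv.sum_comp (Equiv.mulRight g) (fun x => (A x)ᴴ * A x)]
    refine Finset.sum_congr rfl fun x _ => ?_
    simp [hmul, Matrix.mul_assoc]
  have hu : IsUnit H.det := (Matrix.isUnit_iff_isUnit_det _).1 hH.isUnit
  have e1 : (A g)ᴴ = H * A g⁻¹ * H⁻¹ := by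
    have : (A g)ᴴ * H = H * A g⁻¹ := by
      conv_rhs => rw [← hinv g]
      rw [Matrix.mul_assoc _ (A g), ← hmul, mul_inv_cancel, h1, mul_one]
    rw [← this, Matrix.mul_nonsing_inv_cancel_right _ _ hu]
  have e2 : ((A g)ᴴ).trace = (A g⁻¹).trace := by
    rw [e1, Matrix.trace_mul_comm, ← Matrix.mul_assoc, Matrix.nonsing_inv_mul _ hu, one_mul]
  show (A g⁻¹).trace = (starRingEnd ℂ) (A g).trace
  rw [← e2, Matrix.trace_conjTranspose]
  rfl

theorem charOf_isIntegral {G : Type} [Group G] [Finite G] {n : ℕ} (ρ : G →* GL (Fin n) ℂ) (g : G) :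
    IsIntegral ℚ (charOf ρ g) := by
  let A : Matrix (Fin n) (Fin n) ℂ := (ρ g : Matrix (Fin n) (Fin n) ℂ)
  have hA : A ^ (Nat.card G) = 1 := by
    have : ((ρ g) ^ (Nat.card G)) = 1 := by rw [← map_pow, pow_card_eq_one', map_one]
    simpa [A] using congrArg (fun x : GL (Fin n) ℂ => (x : Matrix (Fin n) (Fin n) ℂ)) this
  show IsIntegral ℚ A.trace
  rw [Matrix.trace_eq_sum_roots_charpoly]
  refine IsIntegral.multiset_sum fun μ hμ => ?_
  have h1 := Matrix.mem_spectrum_of_isRoot_charpoly (Polynomial.isRoot_of_mem_roots hμ)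
  have h2 := spectrum.pow_mem_pow A (Nat.card G) h1
  rw [hA] at h2
  have : Nontrivial (Matrix (Fin n) (Fin n) ℂ) := by
    by_contra hn
    rw [not_nontrivial_iff_subsingleton] at hn
    rw [spectrum.of_subsingleton] at h1
    exact h1
  rw [spectrum.one_eq] at h2
  refine IsIntegral.of_pow Nat.card_pos (n := Nat.card G) ?_
  rw [h2]
  exact isIntegral_one

theorem IsIrrChar.map {G : Type} [Group G] {φ : G → ℂ} (hφ : IsIrrChar φ) (σ : ℂ ≃+* ℂ) :
    IsIrrChar (fun g => σ (φ g)) := by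
  obtain ⟨n, ρ, ⟨hn, hirr⟩, rfl⟩ := hφ
  refine ⟨n, (Matrix.GeneralLinearGroup.map (σ : ℂ →+* ℂ)).comp ρ, ⟨hn, fun W hW => ?_⟩, ?_⟩
  · have key : ∀ (g : G) (v : Fin n → ℂ),
        ((((Matrix.GeneralLinearGroup.map (σ : ℂ →+* ℂ)).comp ρ) g : GL (Fin n) ℂ) :
          Matrix (Fin n) (Fin n) ℂ).mulVec (fun i => σ (v i)) =
        fun i => σ ((ρ g : Matrix (Fin n) (Fin n) ℂ).mulVec v i) := by
      intro g v
      ext i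
      simp [Matrix.mulVec, dotProduct]
    let W' : Submodule ℂ (Fin n → ℂ) :=
      { carrier := {v | (fun i => σ (v i)) ∈ W}
        add_mem' := fun {a b} ha hb => by
          have := W.add_mem ha hb
          simp only [Set.mem_ofPred_eq, Pi.add_apply, map_add]
          exact this
        zero_mem' := by
          simp only [Set.mem_ofPred_eq, Pi.zero_apply, map_zero]
          exact W.zero_mem
        smul_mem' := fun c v hv => by
          have := W.smul_mem (σ c) hv
          simp only [Set.mem_ofPred_eq, Pi.smul_apply, smul_eq_mul, map_mul]
          exact this }
    have hW' : ∀ v, v ∈ W' ↔ (fun i => σ (v i)) ∈ W := fun v => Iff.rfl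
    have hsymm : ∀ v : Fin n → ℂ, v ∈ W ↔ (fun i => σ.symm (v i)) ∈ W' := by
      intro v
      rw [hW']
      simp
    rcases hirr W' (fun g v hv => by
      rw [hW', ← key]
      exact hW g _ hv) with h | h
    · left
      rw [Submodule.eq_bot_iff]
      intro v hv
      rw [hsymm, h, Submodule.mem_bot] at hv
      ext i
      have := congrFun hv i
      simpa using this
    · right
      rw [Submodule.eq_top_iff']
      intro v
      rw [hsymm, h]
      trivial
  · ext g
    simp [charOf, Matrix.trace]

open scoped Classical in
/-- Extension by zero of a representation of `U`. -/
def extZero {G : Type} [Group G] {U : Subgroup G} {m : ℕ} (β : ↥U →* GL (Fin m) ℂ) (x : G) :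
    Matrix (Fin m) (Fin m) ℂ :=
  if h : x ∈ U then (β ⟨x, h⟩ : Matrix (Fin m) (Fin m) ℂ) else 0

theorem extZero_of_mem {G : Type} [Group G] {U : Subgroup G} {m : ℕ} (β : ↥U →* GL (Fin m) ℂ)
    (u : U) : extZero β u = (β u : Matrix (Fin m) (Fin m) ℂ) := by
  simp [extZero]

theorem extZero_of_not_mem {G : Type} [Group G] {U : Subgroup G} {m : ℕ} (β : ↥U →* GL (Fin m) ℂ)
    {x : G} (hx : x ∉ U) : extZero β x = 0 := by
  simp [extZero, hx]

theorem extZero_mul {G : Type} [Group G] {U : Subgroup G} {m : ℕ} (β : ↥U →* GL (Fin m) ℂ)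
    (u : U) (x : G) :
    extZero β (u * x) = (β u : Matrix (Fin m) (Fin m) ℂ) * extZero β x := by
  by_cases hx : x ∈ U
  · have h1 := extZero_of_mem β (u * ⟨x, hx⟩)
    have h2 := extZero_of_mem β ⟨x, hx⟩
    simp only [Subgroup.coe_mul] at h1 h2
    rw [h1, h2]
    simp
  · rw [extZero_of_not_mem β hx, extZero_of_not_mem, mul_zero]
    rwa [U.mul_mem_cancel_left u.2]

theorem sum_subgroup_const {G : Type} [Group G] [Fintype G] (U : Subgroup G) {M : Type*}
    [AddCommGroup M] [Module ℂ M] (f : G → M) (c : M) (h1 : ∀ x ∈ U, f x = c)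
    (h2 : ∀ x ∉ U, f x = 0) : ∑ x, f x = (Nat.card U : ℂ) • c := by
  classical
  have : ∀ x, f x = if x ∈ U then c else 0 := fun x => by
    split_ifs with h
    · exact h1 x h
    · exact h2 x h
  simp_rw [this]
  rw [← Finset.sum_filter, Finset.sum_const, Nat.cast_smul_eq_nsmul, Nat.card_eq_fintype_card,
    Fintype.card_subtype]

theorem extZero_conv {G : Type} [Group G] [Fintype G] {U : Subgroup G} {m : ℕ}
    (β : ↥U →* GL (Fin m) ℂ) (a b : G) :
    ∑ y, extZero β (a * y⁻¹) * extZero β (y * b) = (Nat.card U : ℂ) • extZero β (a * b) := by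
  rw [← Equiv.sum_comp ((Equiv.inv G).trans (Equiv.mulRight a))]
  refine sum_subgroup_const U _ _ (fun x hx => ?_) (fun x hx => ?_)
  · have h1 : a * (((Equiv.inv G).trans (Equiv.mulRight a)) x)⁻¹ = x := by simp
    have h2 := extZero_mul β ⟨x, hx⟩ (((Equiv.inv G).trans (Equiv.mulRight a)) x * b)
    rw [h1]
    rw [← extZero_of_mem] at h2
    rw [← h2]
    congr 1
    simp [mul_assoc]
  · have h1 : a * (((Equiv.inv G).trans (Equiv.mulRight a)) x)⁻¹ = x := by simp
    rw [h1, extZero_of_not_mem β hx, zero_mul]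

/-- The operators describing the induced representation. -/
def indQ {G : Type} [Group G] [Fintype G] {U : Subgroup G} {m : ℕ} (β : ↥U →* GL (Fin m) ℂ)
    (g : G) : Matrix (G × Fin m) (G × Fin m) ℂ :=
  Matrix.of fun p q => (Nat.card U : ℂ)⁻¹ * extZero β (p.1 * g * q.1⁻¹) p.2 q.2

theorem card_ne {G : Type} [Group G] [Finite G] (U : Subgroup G) : (Nat.card U : ℂ) ≠ 0 := by
  exact_mod_cast Nat.card_pos.ne'

theorem indQ_mul {G : Type} [Group G] [Fintype G] {U : Subgroup G} {m : ℕ}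
    (β : ↥U →* GL (Fin m) ℂ) (g h : G) : indQ β g * indQ β h = indQ β (g * h) := by
  ext ⟨x, i⟩ ⟨z, k⟩
  have key := congrFun (congrFun (extZero_conv β (x * g) (h * z⁻¹)) i) k
  simp only [Matrix.sum_apply, Matrix.mul_apply, Matrix.smul_apply, smul_eq_mul] at key
  simp only [Matrix.mul_apply, indQ, Matrix.of_apply, Fintype.sum_prod_type]
  have hc := card_ne U
  rw [← mul_assoc x g h, mul_assoc (x * g) h, ← inv_mul_cancel_left₀ hc (extZero β _ i k), ← key,
    Finset.mul_sum, Finset.mul_sum]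
  refine Finset.sum_congr rfl fun y _ => ?_
  rw [Finset.mul_sum, Finset.mul_sum]
  refine Finset.sum_congr rfl fun j _ => ?_
  rw [← mul_assoc y h]
  ring

theorem trace_indQ {G : Type} [Group G] [Fintype G] {U : Subgroup G} {m : ℕ}
    (β : ↥U →* GL (Fin m) ℂ) (g : G) : (indQ β g).trace = inducedChar U (charOf β) g := by
  classical
  simp only [Matrix.trace, Matrix.diag, indQ, Matrix.of_apply, Fintype.sum_prod_type, inducedChar]
  rw [finsum_eq_sum_of_fintype, Finset.mul_sum, ← Equiv.sum_comp (Equiv.inv G)]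
  refine Finset.sum_congr rfl fun x _ => ?_
  rw [← Finset.mul_sum]
  congr 1
  simp only [Equiv.inv_apply, inv_inv]
  by_cases h : x⁻¹ * g * x ∈ U
  · rw [dif_pos h]
    simp [extZero, h, charOf, Matrix.trace]
  · rw [dif_neg h]
    simp [extZero, h]

theorem exists_intertwiner {G : Type} [Group G] [Finite G] {U : Subgroup G} {n m : ℕ}
    (ρ : G →* GL (Fin n) ℂ) (β : ↥U →* GL (Fin m) ℂ)
    (h : cInner (fun u : ↥U => charOf ρ (u : G)) (charOf β) ≠ 0) :
    ∃ T : Matrix (Fin n) (Fin m) ℂ, T ≠ 0 ∧ ∀ w : U,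
      (ρ (w : G) : Matrix (Fin n) (Fin n) ℂ) * T = T * (β w : Matrix (Fin m) (Fin m) ℂ) := by
  classical
  have := Fintype.ofFinite G
  have := Fintype.ofFinite U
  by_contra! hcon
  apply h
  let T : Matrix (Fin n) (Fin m) ℂ → Matrix (Fin n) (Fin m) ℂ := fun E =>
    ∑ u : U, (ρ (u : G) : Matrix (Fin n) (Fin n) ℂ) * E * (β u⁻¹ : Matrix (Fin m) (Fin m) ℂ)
  have hT : ∀ E, T E = 0 := by
    intro E
    by_contra hE
    obtain ⟨w, hw⟩ := hcon _ hE
    apply hw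
    simp only [T, Matrix.mul_sum, Matrix.sum_mul]
    rw [← Equiv.sum_comp (Equiv.mulLeft w) (fun u : U =>
      (ρ (u : G) : Matrix (Fin n) (Fin n) ℂ) * E * (β u⁻¹ : Matrix (Fin m) (Fin m) ℂ) *
        (β w : Matrix (Fin m) (Fin m) ℂ))]
    refine Finset.sum_congr rfl fun u _ => ?_
    have : (β ((Equiv.mulLeft w) u)⁻¹ : Matrix (Fin m) (Fin m) ℂ) * (β w : Matrix (Fin m) (Fin m) ℂ)
        = (β u⁻¹ : Matrix (Fin m) (Fin m) ℂ) := by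
      rw [← Units.val_mul, ← map_mul]
      simp
    rw [Matrix.mul_assoc _ (β _ : Matrix (Fin m) (Fin m) ℂ), this]
    have h2 : (ρ (((Equiv.mulLeft w) u : U) : G) : Matrix (Fin n) (Fin n) ℂ) =
       (ρ (w : G) : Matrix (Fin n) (Fin n) ℂ) * (ρ (u : G) : Matrix (Fin n) (Fin n) ℂ) := by
      rw [← Units.val_mul, ← map_mul]
      simp
    rw [h2]
    simp only [Matrix.mul_assoc]
  unfold cInner
  rw [finsum_eq_sum_of_fintype]
  simp_rw [← charOf_inv]
  have : ∑ u : U, charOf ρ (u : G) * charOf β u⁻¹ =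
      ∑ i, ∑ j, (T (Matrix.single i j 1)) i j := by
    simp only [T, Matrix.sum_apply, charOf, Matrix.trace, Matrix.diag, Finset.sum_mul_sum]
    rw [Finset.sum_comm]
    refine Finset.sum_congr rfl fun i _ => ?_
    rw [Finset.sum_comm]
    refine Finset.sum_congr rfl fun j _ => ?_
    refine Finset.sum_congr rfl fun u _ => ?_
    simp [Matrix.mul_apply, Matrix.single_apply, ite_and]
  rw [this]
  simp [hT]

theorem inducedChar_eq {G : Type} [Group G] [Finite G] {U : Subgroup G} {n m : ℕ}
    (ρ : G →* GL (Fin n) ℂ) (hρ : IsIrredRep ρ) (β : ↥U →* GL (Fin m) ℂ)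
    (h : cInner (fun u : ↥U => charOf ρ (u : G)) (charOf β) ≠ 0)
    (hdeg : inducedChar U (charOf β) 1 = n) :
    charOf ρ = inducedChar U (charOf β) := by
  classical
  have := Fintype.ofFinite G
  obtain ⟨T, hT0, hT⟩ := exists_intertwiner ρ β h
  let F : Matrix (Fin n) (G × Fin m) ℂ :=
    Matrix.of fun a p => ((ρ p.1⁻¹ : Matrix (Fin n) (Fin n) ℂ) * T) a p.2
  have hc := card_ne U
  have hFQ : ∀ g, F * indQ β g = (ρ g : Matrix (Fin n) (Fin n) ℂ) * F := by
    intro g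
    have key : ∀ y : G, ∑ x : G, ((ρ x⁻¹ : Matrix (Fin n) (Fin n) ℂ) * T) *
        extZero β (x * g * y⁻¹) =
        (Nat.card U : ℂ) • ((ρ g : Matrix (Fin n) (Fin n) ℂ) *
          ((ρ y⁻¹ : Matrix (Fin n) (Fin n) ℂ) * T)) := by
      intro y
      rw [← Equiv.sum_comp (Equiv.mulRight (y * g⁻¹))]
      refine sum_subgroup_const U _ _ (fun x hx => ?_) (fun x hx => ?_)
      · have e1 : (Equiv.mulRight (y * g⁻¹)) x * g * y⁻¹ = ((⟨x, hx⟩ : U) : G) := by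
          simp [mul_assoc]
        rw [e1, extZero_of_mem, Matrix.mul_assoc, ← hT]
        simp only [← Matrix.mul_assoc]
        rw [← Units.val_mul, ← Units.val_mul, ← map_mul, ← map_mul]
        congr 3
        simp [mul_assoc]
      · have e1 : (Equiv.mulRight (y * g⁻¹)) x * g * y⁻¹ = x := by
          simp [mul_assoc]
        rw [e1, extZero_of_not_mem β hx, Matrix.mul_zero]
    ext a ⟨y, j⟩
    have k2 := congrFun (congrFun (key y) a) j
    rw [Matrix.sum_apply, Matrix.smul_apply, smul_eq_mul] at k2
    have k3 : ((ρ g : Matrix (Fin n) (Fin n) ℂ) * F) a (y, j) =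
        ((ρ g : Matrix (Fin n) (Fin n) ℂ) *
          ((ρ y⁻¹ : Matrix (Fin n) (Fin n) ℂ) * T)) a j := by
      rw [Matrix.mul_apply, Matrix.mul_apply]
      rfl
    have k4 : ((ρ g : Matrix (Fin n) (Fin n) ℂ) * F) a (y, j) = (Nat.card U : ℂ)⁻¹ *
        ∑ x : G, (((ρ x⁻¹ : Matrix (Fin n) (Fin n) ℂ) * T) * extZero β (x * g * y⁻¹)) a j := by
      rw [k3, k2, inv_mul_cancel_left₀ hc]
    rw [k4, Finset.mul_sum, Matrix.mul_apply, Fintype.sum_prod_type]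
    refine Finset.sum_congr rfl fun x _ => ?_
    rw [Matrix.mul_apply (M := (ρ x⁻¹ : Matrix (Fin n) (Fin n) ℂ) * T), Finset.mul_sum]
    refine Finset.sum_congr rfl fun i _ => ?_
    simp only [F, indQ, Matrix.of_apply]
    ring
  have hF0 : F ≠ 0 := by
    intro h0
    apply hT0
    ext a j
    have := congrFun (congrFun h0 a) ((1 : G), j)
    simpa [F] using this
  have hrange : LinearMap.range F.mulVecLin = ⊤ := by
    refine (hρ.2 _ ?_).resolve_left ?_
    · rintro g _ ⟨v, rfl⟩
      refine ⟨(indQ β g).mulVec v, ?_⟩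
      simp only [Matrix.mulVecLin_apply, Matrix.mulVec_mulVec, hFQ]
    · intro hb
      apply hF0
      rw [LinearMap.range_eq_bot] at hb
      have : Matrix.toLin' F = 0 := hb
      simpa using this
  obtain ⟨S', hS'⟩ := LinearMap.exists_rightInverse_of_surjective _ hrange
  let S : Matrix (G × Fin m) (Fin n) ℂ := LinearMap.toMatrix' S'
  have hFS : F * S = 1 := by
    apply Matrix.toLin'.injective
    rw [Matrix.toLin'_mul, Matrix.toLin'_one]
    simp only [S, Matrix.toLin'_toMatrix']
    exact hS'
  have hρ1 : (ρ 1 : Matrix (Fin n) (Fin n) ℂ) = 1 := by simp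
  have hF1 : F * indQ β 1 = F := by rw [hFQ, hρ1, Matrix.one_mul]
  let P := indQ β 1
  have hPP : P * P = P := by simp [P, indQ_mul]
  have hFP : F * P = F := hF1
  have hD : P - P * S * F = 0 := by
    have hidem : (P - P * S * F) * (P - P * S * F) = P - P * S * F := by
      have e1 : P * (P * S * F) = P * S * F := by
        rw [← Matrix.mul_assoc, ← Matrix.mul_assoc, hPP]
      have e2 : P * S * F * P = P * S * F := by
        rw [Matrix.mul_assoc, hFP]
      have e3 : P * S * F * (P * S * F) = P * S * F := by
        calc P * S * F * (P * S * F) = P * S * ((F * P) * S) * F := by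
              simp only [Matrix.mul_assoc]
          _ = P * S * F := by rw [hFP, hFS, Matrix.mul_one]
      rw [Matrix.sub_mul, Matrix.mul_sub, Matrix.mul_sub, hPP, e1, e2, e3]
      simp
    have htr : (P - P * S * F).trace = 0 := by
      rw [Matrix.trace_sub, Matrix.trace_mul_comm, ← Matrix.mul_assoc, hFP, hFS,
        Matrix.trace_one, trace_indQ, hdeg]
      simp
    have hi : IsIdempotentElem (Matrix.toLin' (P - P * S * F)) := by
      show _ * _ = _
      rw [Module.End.mul_eq_comp, ← Matrix.toLin'_mul, hidem]
    have := (LinearMap.IsIdempotentElem.trace_eq_zero_iff hi).1 (by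
      rw [Matrix.trace_toLin'_eq, htr])
    exact (LinearEquiv.map_eq_zero_iff _).1 this
  have hP : P = P * S * F := sub_eq_zero.1 hD
  ext g
  rw [← trace_indQ]
  have e : indQ β g = indQ β g * P := by simp [P, indQ_mul]
  have e' : indQ β g = (indQ β g * S) * F := by
    calc indQ β g = indQ β g * (P * S * F) := by rw [← hP, ← e]
      _ = (indQ β g * P) * S * F := by simp only [Matrix.mul_assoc]
      _ = (indQ β g * S) * F := by rw [← e]
  rw [e', Matrix.trace_mul_comm, ← Matrix.mul_assoc, hFQ, Matrix.mul_assoc, hFS, Matrix.mul_one]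
  rfl

theorem charField_induced_le {G : Type} [Group G] [Finite G] (U : Subgroup G) (ψ : ↥U → ℂ) :
    charField (inducedChar U ψ) ≤ charField ψ := by
  classical
  have := Fintype.ofFinite G
  refine Subfield.closure_le.2 ?_
  rintro _ ⟨g, rfl⟩
  simp only [inducedChar, finsum_eq_sum_of_fintype]
  refine mul_mem (inv_mem (natCast_mem _ _)) (sum_mem fun x _ => ?_)
  split_ifs with h
  · exact Subfield.subset_closure ⟨_, rfl⟩
  · exact zero_mem _

theorem cInner_eq {U : Type} [Group U] [Fintype U] (α : U → ℂ) {φ : U → ℂ} (hφ : IsIrrChar φ) :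
    cInner α φ = (Nat.card U : ℂ)⁻¹ * ∑ u : U, α u * φ u⁻¹ := by
  obtain ⟨n, ρ, -, rfl⟩ := hφ
  simp only [cInner, finsum_eq_sum_of_fintype, charOf_inv]

theorem IsIrrChar.exists_natCast {U : Type} [Group U] {φ : U → ℂ} (hφ : IsIrrChar φ) :
    ∃ n : ℕ, φ 1 = n := by
  obtain ⟨n, ρ, -, rfl⟩ := hφ
  exact ⟨n, by simp [charOf]⟩

theorem card_conjugates {U : Type} [Group U] [Finite U] (φ : U → ℂ) (hφ : IsIrrChar φ)
    (K : Subfield ℂ) (h : K ≤ charField φ) :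
    letI := (Subfield.inclusion h).toAlgebra
    Set.ncard {θ : U → ℂ | ∃ σ : ℂ ≃ₐ[K] ℂ, θ = fun u => σ (φ u)} =
      Module.finrank K (charField φ) := by
  letI := (Subfield.inclusion h).toAlgebra
  have : IsScalarTower K (charField φ) ℂ := IsScalarTower.of_algebraMap_eq fun x => rfl
  have hIntegral : ∀ x ∈ Set.range φ, IsIntegral K x := by
    rintro _ ⟨u, rfl⟩
    obtain ⟨n, ρ, -, rfl⟩ := hφ
    exact (charOf_isIntegral ρ u).tower_top
  have hmem : ∀ u, φ u ∈ charField φ := fun u => Subfield.subset_closure ⟨u, rfl⟩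
  have hfin : FiniteDimensional K (charField φ) := by
    have := IntermediateField.finiteDimensional_adjoin hIntegral
    have hle : charField φ ≤ (IntermediateField.adjoin K (Set.range φ)).toSubfield :=
      Subfield.closure_le.2 fun x hx => IntermediateField.subset_adjoin _ _ hx
    let f : charField φ →ₗ[K] IntermediateField.adjoin K (Set.range φ) :=
      { toFun := fun x => ⟨x, hle x.2⟩
        map_add' := fun x y => rfl
        map_smul' := fun c x => by
          ext
          simp [Algebra.smul_def]
          exact Or.inl rfl }
    exact FiniteDimensional.of_injective f fun x y hxy => by
      have := congrArg (fun z : IntermediateField.adjoin K (Set.range φ) => (z : ℂ)) hxy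
      exact Subtype.ext this
  have hcount : Cardinal.mk (charField φ) ≤ Cardinal.aleph0 := by
    refine (Subfield.cardinalMk_closure_le_max _).trans (max_le ?_ le_rfl)
    exact (Set.finite_range φ).countable.le_aleph0
  let f : (charField φ →ₐ[K] ℂ) → (U → ℂ) := fun τ u => τ ⟨φ u, hmem u⟩
  have hf : Function.Injective f := by
    intro τ₁ τ₂ h12
    ext ⟨x, hx⟩
    refine Subfield.closure_induction (p := fun x hx => τ₁ ⟨x, hx⟩ = τ₂ ⟨x, hx⟩)
      ?_ ?_ ?_ ?_ ?_ ?_ hx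
    · rintro _ ⟨u, rfl⟩
      exact congrFun h12 u
    · exact (map_one τ₁).trans (map_one τ₂).symm
    · intro a b ha hb h1 h2
      have e1 := map_add τ₁ ⟨a, ha⟩ ⟨b, hb⟩
      have e2 := map_add τ₂ ⟨a, ha⟩ ⟨b, hb⟩
      rw [h1, h2, ← e2] at e1
      exact e1
    · intro a ha h1
      have e1 := map_neg τ₁ ⟨a, ha⟩
      have e2 := map_neg τ₂ ⟨a, ha⟩
      rw [h1, ← e2] at e1
      exact e1
    · intro a ha h1
      have e1 := map_inv₀ τ₁ ⟨a, ha⟩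
      have e2 := map_inv₀ τ₂ ⟨a, ha⟩
      rw [h1, ← e2] at e1
      exact e1
    · intro a b ha hb h1 h2
      have e1 := map_mul τ₁ ⟨a, ha⟩ ⟨b, hb⟩
      have e2 := map_mul τ₂ ⟨a, ha⟩ ⟨b, hb⟩
      rw [h1, h2, ← e2] at e1
      exact e1
  have hrange : {θ : U → ℂ | ∃ σ : ℂ ≃ₐ[K] ℂ, θ = fun u => σ (φ u)} = Set.range f := by
    ext θ
    constructor
    · rintro ⟨σ, rfl⟩
      exact ⟨(σ : ℂ →ₐ[K] ℂ).comp (IsScalarTower.toAlgHom K (charField φ) ℂ), rfl⟩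
    · rintro ⟨τ, rfl⟩
      obtain ⟨σ, hσ⟩ := exists_ringEquiv_extending (charField φ) hcount (τ : charField φ →+* ℂ)
      refine ⟨AlgEquiv.ofRingEquiv (f := σ) fun x => ?_, ?_⟩
      · exact (hσ ⟨x, h x.2⟩).trans (τ.commutes x)
      · ext u
        exact (hσ ⟨φ u, hmem u⟩).symm
  rw [hrange, ← Nat.card_coe_set_eq, Nat.card_range_of_injective hf, Nat.card_eq_fintype_card,
    AlgHom.card]

theorem exists_odd_orbit {Γ X : Type*} [Group Γ] [MulAction Γ X] [Finite X]
    (h : Odd (Nat.card X)) : ∃ x : X, Odd (Nat.card (MulAction.orbit Γ x)) := by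
  classical
  by_contra! hcon
  have := Fintype.ofFinite X
  have := Fintype.ofFinite (Quotient (MulAction.orbitRel Γ X))
  rw [Nat.card_congr (MulAction.selfEquivSigmaOrbits Γ X), Nat.card_sigma] at h
  refine (Nat.not_odd_iff_even.2 (Finset.even_sum _ fun ω _ => ?_)) h
  exact Nat.not_odd_iff_even.1 (hcon _)

theorem stmt19 (G : Type) [Group G] [Finite G] (U : Subgroup G)
    (ψ : ↥U → ℂ) (hψ : IsIrrChar ψ)
    (χ : G → ℂ) (hχdef : χ = inducedChar U ψ) (hχ : IsIrrChar χ) :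
    charField χ ≤ charField ψ ∧
    ∀ Ψ : Set (↥U → ℂ),
      Ψ = {φ | IsIrrChar φ ∧ φ 1 = ψ 1 ∧
        cInner (fun u : ↥U => χ (u : G)) φ ≠ 0} →
      Odd Ψ.ncard →
      ∃ φ ∈ Ψ, ∃ h : charField χ ≤ charField φ,
        letI := (Subfield.inclusion h).toAlgebra
        Odd (Module.finrank ↥(charField χ) ↥(charField φ)) := by
  classical
  have := Fintype.ofFinite U
  refine ⟨hχdef ▸ charField_induced_le U ψ, fun Ψ hΨ hodd => ?_⟩
  have hmem : ∀ φ, φ ∈ Ψ ↔ (IsIrrChar φ ∧ φ 1 = ψ 1 ∧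
      cInner (fun u : ↥U => χ (u : G)) φ ≠ 0) := fun φ => by rw [hΨ]; rfl
  have hle : ∀ φ ∈ Ψ, charField χ ≤ charField φ := by
    intro φ hφ
    obtain ⟨⟨m, β, -, rfl⟩, h1, h2⟩ := (hmem φ).1 hφ
    obtain ⟨n, ρ, hρ, hχρ⟩ := hχ
    have hdeg : inducedChar U (charOf β) 1 = n := by
      have e1 : inducedChar U (charOf β) 1 = inducedChar U ψ 1 := by
        have e : ∀ x : G, (⟨x⁻¹ * 1 * x, by simp⟩ : U) = 1 := fun x => by ext; simp
        simp only [inducedChar]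
        congr 1
        refine finsum_congr fun x => ?_
        have hx : x⁻¹ * 1 * x ∈ U := by simp
        rw [dif_pos hx, dif_pos hx, e, h1]
      rw [e1, ← hχdef, hχρ]
      simp [charOf]
    have := inducedChar_eq ρ hρ β (by rw [← hχρ]; exact h2) hdeg
    rw [hχρ, this]
    exact charField_induced_le U _
  have hfix : ∀ (σ : ℂ ≃ₐ[charField χ] ℂ) (g : G), σ (χ g) = χ g := fun σ g =>
    σ.commutes ⟨χ g, Subfield.subset_closure ⟨g, rfl⟩⟩
  have hstab : ∀ (σ : ℂ ≃ₐ[charField χ] ℂ), ∀ φ ∈ Ψ, (fun u => σ (φ u)) ∈ Ψ := by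
    intro σ φ hφ
    obtain ⟨hirr, h1, h2⟩ := (hmem φ).1 hφ
    have hirr' : IsIrrChar (fun u => σ (φ u)) := hirr.map σ.toRingEquiv
    refine (hmem _).2 ⟨hirr', ?_, ?_⟩
    · obtain ⟨n, hn⟩ := hψ.exists_natCast
      simp only [h1, hn, map_natCast]
    · have : cInner (fun u : ↥U => χ (u : G)) (fun u => σ (φ u)) =
          σ (cInner (fun u : ↥U => χ (u : G)) φ) := by
        rw [cInner_eq _ hirr, cInner_eq _ hirr']
        simp only [map_mul, map_inv₀, map_natCast, map_sum, hfix]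
      rw [this]
      simpa using h2
  let act : MulAction (ℂ ≃ₐ[charField χ] ℂ) Ψ :=
    { smul := fun σ φ => ⟨fun u => σ (φ.1 u), hstab σ φ.1 φ.2⟩
      one_smul := fun φ => rfl
      mul_smul := fun σ τ φ => rfl }
  have hfin : Ψ.Finite := Set.finite_of_ncard_ne_zero (by
    intro h0
    rw [h0] at hodd
    exact absurd hodd (by decide))
  have : Finite Ψ := hfin
  obtain ⟨φ, hφ⟩ := exists_odd_orbit (Γ := ℂ ≃ₐ[charField χ] ℂ) (X := Ψ)
    (by rwa [Nat.card_coe_set_eq])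
  refine ⟨φ.1, φ.2, hle _ φ.2, ?_⟩
  rw [← card_conjugates φ.1 ((hmem _).1 φ.2).1]
  have himg : {θ : U → ℂ | ∃ σ : ℂ ≃ₐ[charField χ] ℂ, θ = fun u => σ (φ.1 u)} =
      Subtype.val '' (MulAction.orbit (ℂ ≃ₐ[charField χ] ℂ) φ) := by
    ext θ
    constructor
    · rintro ⟨σ, rfl⟩
      exact ⟨σ • φ, ⟨σ, rfl⟩, rfl⟩
    · rintro ⟨_, ⟨σ, rfl⟩, rfl⟩
      exact ⟨σ, rfl⟩
  rw [himg, Set.ncard_image_of_injective _ Subtype.val_injective, ← Nat.card_coe_set_eq]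
  exact hφ

end Paper
end
end
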